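/- arXiv:1605.04146 — 10 statements merged into one kernel-verified Lean document; each statement's English description precedes it below -/
import Mathlib

section
/- Minkowski's lattice point theorem, boundary version: Let n ≥ 1, let Λ ⊆ ℝⁿ be a full-rank lattice, and let C ⊆ ℝⁿ be a bounded convex set that is symmetric (C = −C) and has Lebesgue measure vol(C) ≥ 2ⁿ·det(Λ). Then the closure of C contains a point z ∈ Λ with z ≠ 0. -/
open MeasureTheory

theorem minkowski_lattice_point_boundary (n : ℕ) (hn : 1 ≤ n)
    (B : Matrix (Fin n) (Fin n) ℝ) (hB : B.det ≠ 0)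
    (C : Set (Fin n → ℝ)) (hbd : Bornology.IsBounded C)
    (hconv : Convex ℝ C) (hsymm : C = -C)
    (hvol : ENNReal.ofReal (2 ^ n * |B.det|) ≤ volume C) :
    ∃ m : Fin n → ℤ, m ≠ 0 ∧ B.mulVec (fun i => (m i : ℝ)) ∈ closure C := by
  have : Nonempty (Fin n) := ⟨⟨0, hn⟩⟩
  have hu : IsUnit B := (Matrix.isUnit_iff_isUnit_det B).2 (isUnit_iff_ne_zero.2 hB)
  have hli : LinearIndependent ℝ B.col := Matrix.linearIndependent_cols_of_isUnit hu
  let b : Module.Basis (Fin n) ℝ (Fin n → ℝ) :=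
    basisOfLinearIndependentOfCardEqFinrank hli (by simp)
  have hb : ⇑b = B.col := coe_basisOfLinearIndependentOfCardEqFinrank hli (by simp)
  have hsym' : ∀ x ∈ closure C, -x ∈ closure C := by
    intro x hx
    refine map_mem_closure continuous_neg hx ?_
    intro y hy
    rw [hsymm]
    simpa using hy
  have hcpt : IsCompact (closure C) := hbd.isCompact_closure
  have hv : volume (ZSpan.fundamentalDomain b) * 2 ^ Module.finrank ℝ (Fin n → ℝ)
      ≤ volume (closure C) := by
    refine le_trans (le_of_eq ?_) (hvol.trans (measure_mono subset_closure))
    rw [ZSpan.volume_fundamentalDomain, hb, mul_comm, ENNReal.ofReal_mul (by positivity),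
      ENNReal.ofReal_pow (by norm_num)]
    have : (Matrix.of B.col).det = B.det := B.det_transpose
    simp [this]
  have : Countable (Submodule.span ℤ (Set.range b)).toAddSubgroup :=
    inferInstanceAs (Countable (Submodule.span ℤ (Set.range b)))
  have : DiscreteTopology (Submodule.span ℤ (Set.range b)).toAddSubgroup :=
    inferInstanceAs (DiscreteTopology (Submodule.span ℤ (Set.range b)))
  obtain ⟨x, hx0, hx⟩ := exists_ne_zero_mem_lattice_of_measure_mul_two_pow_le_measure
    (L := (Submodule.span ℤ (Set.range b)).toAddSubgroup)
    (ZSpan.isAddFundamentalDomain' b volume) hsym' hconv.closure hcpt hv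
  obtain ⟨m, hm⟩ := (Submodule.mem_span_range_iff_exists_fun ℤ).1 x.2
  have key : B.mulVec (fun i => (m i : ℝ)) = x := by
    rw [← hm, hb]
    ext i
    simp [Matrix.mulVec, dotProduct, Finset.sum_apply, mul_comm]
  refine ⟨m, ?_, key ▸ hx⟩
  rintro rfl
  apply hx0
  ext1
  simpa using hm.symm
end

section
/- Minkowski's theorem on the first minimum of a quadratic form: Let n ≥ 2 and let Q(x) = xᵀAx be a positive definite quadratic form on ℝⁿ given by a symmetric positive definite real n×n matrix A with determinant D = det(A). Then there exist integers x₁,…,xₙ, not all zero, such that Q(x₁,…,xₙ) ≤ (4/π)·Γ(n/2 + 1)^{2/n}·D^{1/n}, where Γ denotes the Gamma function. -/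
open Matrix

open scoped MatrixOrder Matrix.Norms.L2Operator in
lemma exists_factor {n : ℕ} (A : Matrix (Fin n) (Fin n) ℝ) (hA : A.PosDef) :
    ∃ B : Matrix (Fin n) (Fin n) ℝ, A = Bᵀ * B := by
  obtain ⟨B, hB⟩ := CStarAlgebra.nonneg_iff_eq_star_mul_self.mp hA.posSemidef.nonneg
  exact ⟨B, by rw [hB, star_eq_conjTranspose, conjTranspose_eq_transpose_of_trivial]⟩

lemma radius_pow (n : ℕ) (hn : 2 ≤ n) (d G : ℝ) (hd : 0 < d) (hG : 0 < G) :
    √((4 / Real.pi) * G ^ ((2 : ℝ) / n) * (d ^ 2) ^ ((1 : ℝ) / n)) ^ n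
      = 2 ^ n / √Real.pi ^ n * G * d := by
  have hn0 : (n : ℝ) ≠ 0 := by positivity
  have hn1 : n ≠ 0 := by omega
  have h1 : (4 / Real.pi) * G ^ ((2 : ℝ) / n) * (d ^ 2) ^ ((1 : ℝ) / n)
      = (2 / √Real.pi * G ^ ((1 : ℝ) / n) * d ^ ((1 : ℝ) / n)) ^ 2 := by
    rw [mul_pow, mul_pow, div_pow, Real.sq_sqrt Real.pi_pos.le, ← Real.rpow_natCast (G ^ _),
      ← Real.rpow_mul hG.le, ← Real.rpow_natCast (d ^ _), ← Real.rpow_mul hd.le,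
      ← Real.rpow_natCast d 2, ← Real.rpow_mul hd.le]
    norm_num
    rw [div_eq_inv_mul, mul_comm (2 : ℝ)]
    ring_nf
  rw [h1, Real.sqrt_sq (by positivity), mul_pow, mul_pow, div_pow, one_div,
    Real.rpow_inv_natCast_pow hG.le hn1, Real.rpow_inv_natCast_pow hd.le hn1]

theorem minkowski_first_minimum (n : ℕ) (hn : 2 ≤ n)
    (A : Matrix (Fin n) (Fin n) ℝ) (hA : A.PosDef) :
    ∃ x : Fin n → ℤ, x ≠ 0 ∧
      (fun i => (x i : ℝ)) ⬝ᵥ A.mulVec (fun i => (x i : ℝ)) ≤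
        (4 / Real.pi) * Real.Gamma ((n : ℝ) / 2 + 1) ^ ((2 : ℝ) / n) *
          A.det ^ ((1 : ℝ) / n) := by
  have hdet := hA.det_pos
  obtain ⟨B, rfl⟩ := exists_factor A hA
  have hG : 0 < Real.Gamma ((n : ℝ) / 2 + 1) := Real.Gamma_pos_of_pos (by positivity)
  have hD : (Bᵀ * B).det = |B.det| ^ 2 := by rw [det_mul, det_transpose, sq_abs, sq]
  have hB0 : B.det ≠ 0 := by
    intro h
    simp [h] at hD
    rw [det_mul, det_transpose, h] at hdet
    simp at hdet
  have hd : 0 < |B.det| := abs_pos.mpr hB0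
  rw [hD]
  have hr := radius_pow n hn _ _ hd hG
  set R := (4 / Real.pi) * Real.Gamma ((n : ℝ) / 2 + 1) ^ ((2 : ℝ) / n) *
          (|B.det| ^ 2) ^ ((1 : ℝ) / n) with hR
  have hR0 : 0 ≤ R := by positivity
  have hdl : LinearMap.det (Matrix.toLin' B) ≠ 0 := by rwa [LinearMap.det_toLin']
  let e : (Fin n → ℝ) ≃ₗ[ℝ] EuclideanSpace ℝ (Fin n) :=
    ((Matrix.toLin' B).equivOfDetNeZero hdl).trans (WithLp.linearEquiv 2 ℝ (Fin n → ℝ)).symm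
  have he : ∀ x, e x = WithLp.toLp 2 (B *ᵥ x) := fun x => rfl
  let s : Set (Fin n → ℝ) := e ⁻¹' Metric.closedBall 0 (√R)
  have hs : ∀ x ∈ s, x ⬝ᵥ (Bᵀ * B) *ᵥ x ≤ R := by
    intro x hx
    have h1 : ‖e x‖ ≤ √R := by simpa [s] using hx
    have h2 : ‖e x‖ ^ 2 = x ⬝ᵥ (Bᵀ * B) *ᵥ x := by
      rw [he, EuclideanSpace.real_norm_sq_eq, ← mulVec_mulVec, dotProduct_mulVec,
        vecMul_transpose]
      simp [dotProduct, sq]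
    rw [← h2, ← Real.sq_sqrt hR0]
    gcongr
  have hvol : MeasureTheory.volume s =
      ENNReal.ofReal |B.det|⁻¹ * MeasureTheory.volume (Metric.closedBall (0 : EuclideanSpace ℝ (Fin n)) (√R)) := by
    have : s = Matrix.toLin' B ⁻¹' (WithLp.toLp 2 ⁻¹' Metric.closedBall 0 (√R)) := rfl
    rw [this, MeasureTheory.Measure.addHaar_preimage_linearMap _ hdl, LinearMap.det_toLin',
      abs_inv, (PiLp.volume_preserving_toLp (Fin n)).measure_preimage
        Metric.isClosed_closedBall.measurableSet.nullMeasurableSet]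
  have : Countable (Submodule.span ℤ (Set.range (Pi.basisFun ℝ (Fin n)))).toAddSubgroup :=
    inferInstanceAs (Countable (Submodule.span ℤ (Set.range (Pi.basisFun ℝ (Fin n)))))
  have : DiscreteTopology (Submodule.span ℤ (Set.range (Pi.basisFun ℝ (Fin n)))).toAddSubgroup :=
    inferInstanceAs (DiscreteTopology (Submodule.span ℤ (Set.range (Pi.basisFun ℝ (Fin n)))))
  have : Nonempty (Fin n) := ⟨⟨0, by omega⟩⟩
  have key := MeasureTheory.exists_ne_zero_mem_lattice_of_measure_mul_two_pow_le_measure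
    (s := s) (μ := MeasureTheory.volume)
    (L := (Submodule.span ℤ (Set.range (Pi.basisFun ℝ (Fin n)))).toAddSubgroup)
    (ZSpan.isAddFundamentalDomain' (Pi.basisFun ℝ (Fin n)) MeasureTheory.volume)
    (fun x hx => by simpa [s] using hx)
    ((convex_closedBall _ _).linear_preimage e.toLinearMap)
    ((e.toContinuousLinearEquiv.toHomeomorph.isCompact_preimage).mpr (isCompact_closedBall _ _))
    (by
      have h2 : (2 : ENNReal) ^ n = ENNReal.ofReal (2 ^ n) := by
        rw [ENNReal.ofReal_pow (by norm_num)]; simp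
      rw [hvol, EuclideanSpace.volume_closedBall, ZSpan.fundamentalDomain_pi_basisFun,
        Real.volume_pi_Ico]
      simp only [sub_zero, ENNReal.ofReal_one, Finset.prod_const_one, one_mul,
        Module.finrank_fin_fun, Fintype.card_fin]
      rw [← ENNReal.ofReal_pow (Real.sqrt_nonneg _), ← ENNReal.ofReal_mul (by positivity),
        ← ENNReal.ofReal_mul (by positivity), hr, h2]
      apply ENNReal.ofReal_le_ofReal
      have := Real.sqrt_pos.mpr Real.pi_pos
      apply le_of_eq
      field_simp)
  obtain ⟨⟨x, hxL⟩, hx0, hxs⟩ := key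
  have hxL' := ((Pi.basisFun ℝ (Fin n)).mem_span_iff_repr_mem ℤ x).mp hxL
  choose z hz using hxL'
  have hzx : (fun i => (z i : ℝ)) = x := by
    ext i
    simpa using hz i
  refine ⟨z, ?_, ?_⟩
  · rintro rfl
    apply hx0
    ext i
    simp [← hzx]
  · rw [hzx]
    exact hs x hxs
end

section
/- Blichfeldt's improvement of the Hermite constant bound: Let n ≥ 2 and let Q(x) = xᵀAx be a positive definite quadratic form on ℝⁿ given by a symmetric positive definite real n×n matrix A with determinant D = det(A). Then there exist integers x₁,…,xₙ, not all zero, such that Q(x₁,…,xₙ) ≤ (2/π)·Γ(2 + n/2)^{2/n}·D^{1/n}, where Γ denotes the Gamma function. -/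
open Matrix MeasureTheory

lemma bl_key {ι E : Type*} [NormedAddCommGroup E] [InnerProductSpace ℝ E] (s : Finset ι)
    (v : ι → E) (R : ℝ) (hR : 0 < R)
    (h : ∀ i ∈ s, ∀ j ∈ s, i ≠ j → 2 * R ^ 2 ≤ ‖v i - v j‖ ^ 2) :
    ∑ i ∈ s, (1 - ‖v i‖ ^ 2 / R ^ 2) ≤ 1 := by
  classical
  rcases s.eq_empty_or_nonempty with rfl | hs
  · simp
  have e1 : ∑ i ∈ s, ∑ j ∈ s, ‖v i - v j‖ ^ 2 =
      2 * s.card * ∑ i ∈ s, ‖v i‖ ^ 2 - 2 * ‖∑ i ∈ s, v i‖ ^ 2 := by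
    have : ‖∑ i ∈ s, v i‖ ^ 2 = ∑ i ∈ s, ∑ j ∈ s, inner ℝ (v i) (v j) := by
      rw [← real_inner_self_eq_norm_sq, sum_inner]
      simp_rw [inner_sum]
    rw [this]
    simp_rw [norm_sub_sq_real, Finset.sum_add_distrib, Finset.sum_sub_distrib,
      Finset.sum_const, nsmul_eq_mul, ← Finset.mul_sum]
    ring
  have e2 : ∑ i ∈ s, ∑ j ∈ s, (if i = j then 0 else 2 * R ^ 2) ≤
      ∑ i ∈ s, ∑ j ∈ s, ‖v i - v j‖ ^ 2 := by
    refine Finset.sum_le_sum fun i hi => Finset.sum_le_sum fun j hj => ?_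
    split_ifs with hij
    · positivity
    · exact h i hi j hj hij
  have e3 : ∑ i ∈ s, ∑ j ∈ s, (if i = j then 0 else 2 * R ^ 2) =
      s.card * ((s.card - 1) * (2 * R ^ 2)) := by
    rw [← nsmul_eq_mul, ← Finset.sum_const]
    refine Finset.sum_congr rfl fun i hi => ?_
    have : ∀ j, (if i = j then 0 else 2 * R ^ 2) = 2 * R ^ 2 - (if i = j then 2 * R ^ 2 else 0) := by
      intro j; split_ifs <;> simp
    simp_rw [this, Finset.sum_sub_distrib, Finset.sum_ite_eq, if_pos hi, Finset.sum_const,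
      nsmul_eq_mul]
    ring
  have hc : (0:ℝ) < s.card := by exact_mod_cast hs.card_pos
  have e4 : (s.card - 1) * R ^ 2 ≤ ∑ i ∈ s, ‖v i‖ ^ 2 := by
    rw [e3, e1] at e2
    have : (s.card : ℝ) * ((s.card - 1) * R ^ 2) ≤ s.card * ∑ i ∈ s, ‖v i‖ ^ 2 := by
      nlinarith [sq_nonneg ‖∑ i ∈ s, v i‖]
    exact le_of_mul_le_mul_left this hc
  rw [Finset.sum_sub_distrib, ← Finset.sum_div]
  simp only [Finset.sum_const, nsmul_eq_mul, mul_one]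
  have := (le_div_iff₀ (by positivity : 0 < R ^ 2)).2 e4
  linarith

lemma bl_key' {ι E : Type*} [NormedAddCommGroup E] [InnerProductSpace ℝ E]
    (v : ι → E) (R : ℝ) (hR : 0 < R)
    (h : ∀ i j, i ≠ j → 2 * R ^ 2 ≤ ‖v i - v j‖ ^ 2) :
    ∑' i, ENNReal.ofReal (max 0 (1 - ‖v i‖ ^ 2 / R ^ 2)) ≤ 1 := by
  classical
  rw [ENNReal.tsum_eq_iSup_sum]
  refine iSup_le fun s => ?_
  rw [← ENNReal.ofReal_sum_of_nonneg (fun i _ => le_max_left _ _)]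
  rw [ENNReal.ofReal_le_one]
  have := bl_key (s.filter fun i => 0 < 1 - ‖v i‖ ^ 2 / R ^ 2) v R hR
    (fun i _ j _ hij => h i j hij)
  refine le_trans (le_of_eq ?_) this
  rw [Finset.sum_filter]
  refine Finset.sum_congr rfl fun i _ => ?_
  split_ifs with hi
  · exact max_eq_right hi.le
  · exact max_eq_left (not_lt.1 hi)

lemma bl_int (n : ℕ) (hn : 0 < n) (R : ℝ) (hR : 0 < R) :
    ∫⁻ z : EuclideanSpace ℝ (Fin n), ENNReal.ofReal (max 0 (1 - ‖z‖ ^ 2 / R ^ 2)) =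
      ENNReal.ofReal (√Real.pi ^ n * R ^ n / Real.Gamma (2 + n / 2)) := by
  have : Nonempty (Fin n) := ⟨⟨0, hn⟩⟩
  have : Nontrivial (EuclideanSpace ℝ (Fin n)) :=
    Module.nontrivial_of_finrank_pos (R := ℝ) (by simpa using hn)
  have hcont : Continuous fun z : EuclideanSpace ℝ (Fin n) => max 0 (1 - ‖z‖ ^ 2 / R ^ 2) := by
    fun_prop
  have hz : ∀ y : ℝ, R ≤ y → max 0 (1 - y ^ 2 / R ^ 2) = 0 := by
    intro y hy
    apply max_eq_left
    have : 1 ≤ y ^ 2 / R ^ 2 := by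
      rw [one_le_div (by positivity)]; gcongr
    linarith
  have hfInt : Integrable fun z : EuclideanSpace ℝ (Fin n) => max 0 (1 - ‖z‖ ^ 2 / R ^ 2) := by
    apply hcont.integrable_of_hasCompactSupport
    refine HasCompactSupport.intro (isCompact_closedBall 0 R) fun x hx => hz _ ?_
    simp at hx
    exact hx.le
  rw [← ofReal_integral_eq_lintegral_ofReal hfInt (Filter.Eventually.of_forall fun _ => le_max_left _ _)]
  congr 1
  rw [integral_fun_norm_addHaar volume (fun y => max 0 (1 - y ^ 2 / R ^ 2))]
  have hI : ∫ y in Set.Ioi (0:ℝ), y ^ (n - 1) • max 0 (1 - y ^ 2 / R ^ 2) =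
      R ^ n * (2 / (n * (n + 2))) := by
    have : ∫ y in Set.Ioi (0:ℝ), y ^ (n - 1) • max 0 (1 - y ^ 2 / R ^ 2) =
        ∫ y in Set.Ioc (0:ℝ) R, y ^ (n - 1) • max 0 (1 - y ^ 2 / R ^ 2) := by
      refine (setIntegral_eq_of_subset_of_forall_sdiff_eq_zero measurableSet_Ioi
        Set.Ioc_subset_Ioi_self fun x hx => ?_)
      rw [hz x, smul_zero]
      by_contra hc
      exact hx.2 ⟨hx.1, (not_le.1 hc).le⟩
    rw [this]
    have : ∫ y in Set.Ioc (0:ℝ) R, y ^ (n - 1) • max 0 (1 - y ^ 2 / R ^ 2) =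
        ∫ y in Set.Ioc (0:ℝ) R, (y ^ (n - 1) - y ^ (n + 1) * (R ^ 2)⁻¹) := by
      refine setIntegral_congr_fun measurableSet_Ioc fun x hx => ?_
      have : x ^ 2 / R ^ 2 ≤ 1 := by
        rw [div_le_one (by positivity)]
        exact pow_le_pow_left₀ hx.1.le hx.2 2
      rw [max_eq_right (by linarith), smul_eq_mul, show n + 1 = n - 1 + 2 by omega, pow_add]
      ring
    rw [this, ← intervalIntegral.integral_of_le hR.le, intervalIntegral.integral_sub
      (by apply Continuous.intervalIntegrable; fun_prop)
      (by apply Continuous.intervalIntegrable; fun_prop), intervalIntegral.integral_mul_const,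
      integral_pow, integral_pow]
    obtain ⟨k, rfl⟩ : ∃ k, n = k + 1 := ⟨n - 1, by omega⟩
    have hk : (0:ℝ) < k + 1 := by positivity
    simp only [Nat.add_sub_cancel]
    push_cast
    field_simp
    ring
  have hfr : Module.finrank ℝ (EuclideanSpace ℝ (Fin n)) = n := by simp
  rw [hfr, hI, Measure.real, EuclideanSpace.volume_ball]
  have hG : 0 < Real.Gamma ((n:ℝ) / 2 + 1) := Real.Gamma_pos_of_pos (by positivity)
  have hG2 : Real.Gamma (2 + (n:ℝ) / 2) = ((n:ℝ) / 2 + 1) * Real.Gamma ((n:ℝ) / 2 + 1) := by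
    rw [← Real.Gamma_add_one (by positivity)]; congr 1; ring
  rw [hG2]
  simp only [Fintype.card_fin, ENNReal.ofReal_one, one_pow, one_mul]
  rw [ENNReal.toReal_ofReal (by positivity)]
  have : (0:ℝ) < n := by exact_mod_cast hn
  simp only [nsmul_eq_mul, smul_eq_mul]
  field_simp

lemma bl_quad {n : ℕ} (B : Matrix (Fin n) (Fin n) ℝ) (x : Fin n → ℝ) :
    x ⬝ᵥ (star B * B).mulVec x = ‖WithLp.toLp 2 (B *ᵥ x)‖ ^ 2 := by
  rw [EuclideanSpace.norm_sq_eq, ← Matrix.mulVec_mulVec, star_eq_conjTranspose,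
    conjTranspose_eq_transpose_of_trivial, Matrix.dotProduct_mulVec, Matrix.vecMul_transpose]
  simp [dotProduct, sq]

lemma bl_main (n : ℕ) (hn : 0 < n) (B : Matrix (Fin n) (Fin n) ℝ) (hB : B.det ≠ 0) (R : ℝ)
    (hR : 0 < R)
    (h : ∀ x : Fin n → ℤ, x ≠ 0 →
      2 * R ^ 2 ≤ ‖WithLp.toLp 2 (B *ᵥ (fun i => (x i : ℝ)))‖ ^ 2) :
    √Real.pi ^ n * R ^ n / Real.Gamma (2 + n / 2) ≤ |B.det| := by
  set b := Pi.basisFun ℝ (Fin n)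
  let F : EuclideanSpace ℝ (Fin n) → ENNReal :=
    fun z => ENNReal.ofReal (max 0 (1 - ‖z‖ ^ 2 / R ^ 2))
  have hF : Measurable F := by fun_prop
  have hBm : Measurable (toLin' B) := (LinearMap.continuous_on_pi _).measurable
  have hT : Measurable (fun v : Fin n → ℝ => (WithLp.toLp 2 v : EuclideanSpace ℝ (Fin n))) :=
    (PiLp.volume_preserving_toLp (Fin n)).measurable
  have h1 : ∫⁻ y : Fin n → ℝ, F (WithLp.toLp 2 (B *ᵥ y)) ≤ 1 := by
    have : Countable (Submodule.span ℤ (Set.range b)).toAddSubgroup :=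
      inferInstanceAs (Countable (Submodule.span ℤ (Set.range b)))
    rw [(ZSpan.isAddFundamentalDomain' b volume).lintegral_eq_tsum'']
    rw [← lintegral_tsum]
    · calc _ ≤ ∫⁻ y in ZSpan.fundamentalDomain b, 1 := by
            refine lintegral_mono fun y => ?_
            refine bl_key' (fun g : (Submodule.span ℤ (Set.range b)).toAddSubgroup =>
              (WithLp.toLp 2 (B *ᵥ (g +ᵥ y)) : EuclideanSpace ℝ (Fin n))) R hR ?_
            intro g g' hgg
            obtain ⟨z, hz⟩ := (Submodule.mem_span_range_iff_exists_fun ℤ).1 (g - g').2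
            have hz' : (fun i => (z i : ℝ)) = (g : Fin n → ℝ) - g' := by
              rw [AddSubgroupClass.coe_sub] at hz
              rw [← hz]
              ext i
              simp [b, Finset.sum_apply, Pi.single_apply]
            have hz0 : z ≠ 0 := by
              rintro rfl
              apply hgg
              apply Subtype.ext
              rw [← sub_eq_zero, ← hz']
              ext; simp
            have := h z hz0
            rw [hz'] at this
            have hd : (WithLp.toLp 2 (B *ᵥ (g +ᵥ y)) : EuclideanSpace ℝ (Fin n)) -
                WithLp.toLp 2 (B *ᵥ (g' +ᵥ y)) =
                WithLp.toLp 2 (B *ᵥ ((g : Fin n → ℝ) - g')) := by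
              rw [← WithLp.toLp_sub, ← Matrix.mulVec_sub]
              congr 2
              simp [AddSubgroup.vadd_def]
            simp only [hd]
            exact this
        _ = 1 := by
            rw [setLIntegral_one, ZSpan.fundamentalDomain_pi_basisFun, volume_pi, Measure.pi_pi]
            simp
    · intro g
      have hadd : Measurable fun y : Fin n → ℝ => g +ᵥ y := measurable_const_vadd g
      exact (hF.comp (hT.comp (hBm.comp hadd))).aemeasurable
  have h2 : ∫⁻ y : Fin n → ℝ, F (WithLp.toLp 2 (B *ᵥ y)) =
      ENNReal.ofReal (|B.det⁻¹|) * ENNReal.ofReal (√Real.pi ^ n * R ^ n / Real.Gamma (2 + n / 2)) := by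
    rw [← bl_int n hn R hR, ← (PiLp.volume_preserving_toLp (Fin n)).lintegral_comp hF]
    have := lintegral_map (μ := volume) (hF.comp hT) hBm
    rw [Real.map_matrix_volume_pi_eq_smul_volume_pi hB, lintegral_smul_measure] at this
    exact this.symm
  rw [h2, ← ENNReal.ofReal_mul (abs_nonneg _), ENNReal.ofReal_le_one, abs_inv,
    inv_mul_le_iff₀ (abs_pos.2 hB), mul_one] at h1
  exact h1

lemma bl_min (n : ℕ) (hn : 0 < n) (B : Matrix (Fin n) (Fin n) ℝ) (hB : B.det ≠ 0) :
    ∃ x : Fin n → ℤ, x ≠ 0 ∧ ∀ y : Fin n → ℤ, y ≠ 0 →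
      ‖WithLp.toLp 2 (B *ᵥ (fun i => (x i : ℝ)))‖ ^ 2 ≤
      ‖WithLp.toLp 2 (B *ᵥ (fun i => (y i : ℝ)))‖ ^ 2 := by
  let f : (Fin n → ℤ) → ℝ := fun x => ‖WithLp.toLp 2 (B *ᵥ (fun i => (x i : ℝ)))‖
  have hfin : ∀ r, {x | f x ≤ r}.Finite := by
    intro r
    have hemb : Topology.IsClosedEmbedding (fun (x : Fin n → ℤ) (i : Fin n) => (x i : ℝ)) :=
      Topology.IsClosedEmbedding.piMap fun _ => Int.isClosedEmbedding_coe_real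
    have hc : IsCompact ((fun v : EuclideanSpace ℝ (Fin n) => B⁻¹ *ᵥ (WithLp.ofLp v)) ''
        Metric.closedBall 0 r) := by
      apply (isCompact_closedBall _ _).image
      fun_prop
    refine ((hemb.isCompact_preimage hc).finite_of_discrete).subset ?_
    intro x hx
    refine ⟨WithLp.toLp 2 (B *ᵥ (fun i => (x i : ℝ))), by simpa using hx, ?_⟩
    simp [Matrix.mulVec_mulVec, Matrix.nonsing_inv_mul _ (isUnit_iff_ne_zero.2 hB)]
  let e : Fin n → ℤ := fun _ => 1
  have he : e ≠ 0 := fun h => by simpa [e] using congrFun h ⟨0, hn⟩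
  have hS : ({x | f x ≤ f e} ∩ {x | x ≠ 0}).Finite := (hfin _).inter_of_left _
  obtain ⟨x, hx, hmin⟩ := Set.exists_min_image _ f hS ⟨e, le_refl (f e), he⟩
  refine ⟨x, hx.2, fun y hy => ?_⟩
  have : f x ≤ f y := by
    by_cases h : f y ≤ f e
    · exact hmin y ⟨h, hy⟩
    · exact hx.1.trans (not_le.1 h).le
  exact pow_le_pow_left₀ (norm_nonneg _) this 2

theorem blichfeldt_hermite_bound (n : ℕ) (hn : 2 ≤ n)
    (A : Matrix (Fin n) (Fin n) ℝ) (hA : A.PosDef) :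
    ∃ x : Fin n → ℤ, x ≠ 0 ∧
      (fun i => (x i : ℝ)) ⬝ᵥ A.mulVec (fun i => (x i : ℝ)) ≤
        (2 / Real.pi) * Real.Gamma (2 + (n : ℝ) / 2) ^ ((2 : ℝ) / n) *
          A.det ^ ((1 : ℝ) / n) := by
  have hdA := hA.det_pos
  obtain ⟨B, hBA⟩ : ∃ B : Matrix (Fin n) (Fin n) ℝ, A = star B * B := by
    open scoped MatrixOrder Matrix.Norms.L2Operator in
    exact CStarAlgebra.nonneg_iff_eq_star_mul_self.mp hA.posSemidef.nonneg
  have hdet : A.det = |B.det| ^ 2 := by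
    rw [hBA, det_mul, star_eq_conjTranspose, conjTranspose_eq_transpose_of_trivial, det_transpose,
      sq_abs, sq]
  have hB : B.det ≠ 0 := by
    intro h; rw [hdet, h] at hdA; simp at hdA
  obtain ⟨x, hx, hmin⟩ := bl_min n (by omega) B hB
  refine ⟨x, hx, ?_⟩
  have hpos : 0 < (fun i => (x i : ℝ)) ⬝ᵥ A.mulVec (fun i => (x i : ℝ)) := by
    have := hA.dotProduct_mulVec_pos (x := fun i => (x i : ℝ)) (by
      intro h; apply hx; ext i; simpa using congrFun h i)
    simpa using this
  rw [hdet]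
  rw [hBA, bl_quad] at hpos ⊢
  set m := ‖WithLp.toLp 2 (B *ᵥ (fun i => (x i : ℝ)))‖ ^ 2 with hm
  have hR : 0 < √(m / 2) := Real.sqrt_pos.2 (by positivity)
  have key := bl_main n (by omega) B hB (√(m / 2)) hR (by
    intro y hy
    rw [Real.sq_sqrt (by positivity)]
    linarith [hmin y hy])
  have hG : 0 < Real.Gamma (2 + (n:ℝ) / 2) := Real.Gamma_pos_of_pos (by positivity)
  have hn0 : (0:ℝ) < n := by positivity
  rw [div_le_iff₀ hG, ← mul_pow, ← Real.sqrt_mul Real.pi_pos.le] at key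
  have hP : 0 ≤ Real.pi * (m / 2) := by positivity
  have k2 := Real.rpow_le_rpow (by positivity) key (by positivity : (0:ℝ) ≤ 2 / n)
  rw [Real.mul_rpow (abs_nonneg _) hG.le, ← Real.rpow_natCast, ← Real.rpow_mul (by positivity),
    mul_div_cancel₀ _ hn0.ne', Real.rpow_two, Real.sq_sqrt hP] at k2
  have k3 : (|B.det| ^ 2) ^ ((1:ℝ) / n) = |B.det| ^ ((2:ℝ) / n) := by
    rw [← Real.rpow_two, ← Real.rpow_mul (abs_nonneg _)]
    congr 1; ring
  rw [k3]
  have hpi := Real.pi_pos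
  rw [div_mul_eq_mul_div, div_mul_eq_mul_div, le_div_iff₀ hpi]
  nlinarith
end

section
/- Minkowski's linear forms theorem: Let n ≥ 1 and let Y_j(X) = α_{j1}X₁ + ⋯ + α_{jn}Xₙ for j = 1,…,n be linear forms with real coefficients α_{jk}. Let λ₁,…,λₙ be positive reals with λ₁·…·λₙ ≥ |det(α_{jk})|. Then there exist integers x₁,…,xₙ, not all zero, such that |Y_j(x₁,…,xₙ)| ≤ λ_j for all j = 1,…,n. -/
open Matrix

theorem minkowski_linear_forms (n : ℕ) (hn : 1 ≤ n)
    (α : Matrix (Fin n) (Fin n) ℝ) (l : Fin n → ℝ) (hl : ∀ j, 0 < l j)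
    (h : |α.det| ≤ ∏ j, l j) :
    ∃ x : Fin n → ℤ, x ≠ 0 ∧
      ∀ j, |α.mulVec (fun i => (x i : ℝ)) j| ≤ l j := by
  classical
  have : Nonempty (Fin n) := ⟨⟨0, hn⟩⟩
  let b := Pi.basisFun ℝ (Fin n)
  let L := (Submodule.span ℤ (Set.range b)).toAddSubgroup
  have fund : MeasureTheory.IsAddFundamentalDomain L (ZSpan.fundamentalDomain b)
      MeasureTheory.volume := ZSpan.isAddFundamentalDomain b _
  have : Countable L := inferInstanceAs (Countable (Submodule.span ℤ (Set.range b)))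
  have : DiscreteTopology L :=
    inferInstanceAs (DiscreteTopology (Submodule.span ℤ (Set.range b)))
  have hF : MeasureTheory.volume (ZSpan.fundamentalDomain b) = 1 := by
    rw [ZSpan.fundamentalDomain_pi_basisFun, MeasureTheory.volume_pi_pi]
    simp
  let B : Set (Fin n → ℝ) := Set.Icc (-l) l
  let s : Set (Fin n → ℝ) := (Matrix.toLin' α) ⁻¹' B
  have hB : MeasureTheory.volume B = ENNReal.ofReal (∏ j, l j) * 2 ^ n := by
    rw [Real.volume_Icc_pi, ENNReal.ofReal_prod_of_nonneg (fun j _ => (hl j).le)]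
    have : ∀ j, ENNReal.ofReal (l j - (-l) j) = ENNReal.ofReal (l j) * 2 := by
      intro j
      rw [Pi.neg_apply, sub_neg_eq_add, ← mul_two, ENNReal.ofReal_mul (hl j).le]
      simp
    simp_rw [this, Finset.prod_mul_distrib]
    simp
  have h_symm : ∀ x ∈ s, -x ∈ s := by
    intro x hx
    simp only [s, B, Set.mem_preimage, Set.mem_Icc, map_neg] at hx ⊢
    exact ⟨neg_le_neg hx.2, neg_le.mp hx.1⟩
  have h_conv : Convex ℝ s := (convex_Icc _ _).linear_preimage _
  have key : (∃ x ≠ 0, ((x : L) : Fin n → ℝ) ∈ s) := by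
    by_cases hd : α.det = 0
    · apply MeasureTheory.exists_ne_zero_mem_lattice_of_measure_mul_two_pow_lt_measure
        fund h_symm h_conv
      have hpos : MeasureTheory.volume s ≠ 0 := by
        have hc : Continuous (Matrix.toLin' α) := LinearMap.continuous_of_finiteDimensional _
        have hn : s ∈ nhds (0 : Fin n → ℝ) := by
          apply hc.continuousAt.preimage_mem_nhds
          rw [map_zero]
          exact pi_Icc_mem_nhds (fun j => by simpa using hl j) (fun j => hl j)
        exact (MeasureTheory.Measure.measure_pos_of_mem_nhds _ hn).ne'
      obtain ⟨v, hv, hαv⟩ := Matrix.exists_mulVec_eq_zero_iff.mpr hd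
      obtain ⟨i, hi⟩ := Function.ne_iff.mp hv
      have hi : v i ≠ 0 := hi
      let M : Matrix (Fin n) (Fin n) ℝ := 1 + vecMulVec v (Pi.single i (v i)⁻¹)
      have hM : M.det = 2 := by
        simp only [M]
        rw [Matrix.vecMulVec_eq Unit, Matrix.det_one_add_replicateCol_mul_replicateRow]
        simp [hi]
        norm_num
      have hαM : α * M = α := by
        simp only [M]
        rw [mul_add, Matrix.mul_vecMulVec, hαv]
        simp
      have hs : (Matrix.toLin' M) ⁻¹' s = s := by
        simp only [s]
        rw [← Set.preimage_comp, ← LinearMap.coe_comp, ← Matrix.toLin'_mul, hαM]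
      have hm := MeasureTheory.Measure.addHaar_preimage_linearMap
        (MeasureTheory.volume : MeasureTheory.Measure (Fin n → ℝ))
        (f := Matrix.toLin' M) (by rw [LinearMap.det_toLin', hM]; norm_num) s
      rw [hs, LinearMap.det_toLin', hM] at hm
      have htop : MeasureTheory.volume s = ⊤ := by
        by_contra hne
        have h2 := congrArg ENNReal.toReal hm
        rw [ENNReal.toReal_mul, ENNReal.toReal_ofReal (abs_nonneg _)] at h2
        have h3 := ENNReal.toReal_pos hpos hne
        norm_num at h2
        linarith
      rw [htop, hF]
      simp
    · apply MeasureTheory.exists_ne_zero_mem_lattice_of_measure_mul_two_pow_le_measure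
        fund h_symm h_conv
      · have : IsUnit α.det := isUnit_iff_ne_zero.mpr hd
        have hc : Continuous (Matrix.toLin' α⁻¹) := LinearMap.continuous_of_finiteDimensional _
        have : s = (Matrix.toLin' α⁻¹) '' B := by
          symm
          refine congrFun (Set.image_eq_preimage_of_inverse ?_ ?_) B
          · intro x; simp [Matrix.mulVec_mulVec, Matrix.mul_nonsing_inv _ this]
          · intro x; simp [Matrix.mulVec_mulVec, Matrix.nonsing_inv_mul _ this]
        rw [this]
        exact isCompact_Icc.image hc
      · have hm := MeasureTheory.Measure.addHaar_preimage_linearMap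
          (MeasureTheory.volume : MeasureTheory.Measure (Fin n → ℝ))
          (f := Matrix.toLin' α) (by rwa [LinearMap.det_toLin']) B
        rw [LinearMap.det_toLin'] at hm
        change _ ≤ MeasureTheory.volume ((Matrix.toLin' α) ⁻¹' B)
        rw [hm, hF, hB, ← mul_assoc, ← ENNReal.ofReal_mul (abs_nonneg _)]
        simp only [Module.finrank_fin_fun]
        gcongr
        rw [ENNReal.one_le_ofReal, abs_inv, inv_mul_eq_div, one_le_div (abs_pos.mpr hd)]
        exact h
  obtain ⟨⟨x, hxL⟩, hx0, hxs⟩ := key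
  have hxL' : x ∈ Submodule.span ℤ (Set.range b) := hxL
  rw [Module.Basis.mem_span_iff_repr_mem] at hxL'
  choose y hy using hxL'
  have hyx : (fun i => (y i : ℝ)) = x := by
    funext i
    simpa [b] using hy i
  refine ⟨y, ?_, ?_⟩
  · rintro rfl
    apply hx0
    apply Subtype.ext
    refine hyx.symm.trans ?_
    funext i
    simp
  · intro j
    rw [hyx, abs_le]
    exact ⟨hxs.1 j, hxs.2 j⟩
end

section
/- Minkowski's theorem on successive minima: Let n ≥ 1, let Λ ⊆ ℝⁿ be a full-rank lattice, and let C ⊆ ℝⁿ be a compact convex set that is symmetric (C = −C) and contains 0 in its interior. For j = 1,…,n define the j-th successive minimum λ_j = inf{λ > 0 : λC ∩ Λ contains j linearly independent vectors}. Then 2ⁿ/n! ≤ λ₁·…·λₙ · vol(C)/det(Λ) ≤ 2ⁿ. -/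
open MeasureTheory Pointwise

/-- the half-open unit cube -/
def msmCube (I : Type*) : Set (I → ℝ) := {x | ∀ i, 0 ≤ x i ∧ x i < 1}

lemma msmCube_eq (I : Type*) [Fintype I] :
    msmCube I = ZSpan.fundamentalDomain (Pi.basisFun ℝ I) := by
  ext x
  simp [msmCube, ZSpan.mem_fundamentalDomain, Set.mem_Ico]

lemma msm_measCube (I : Type*) [Fintype I] : MeasurableSet (msmCube I) := by
  rw [msmCube_eq]; exact ZSpan.fundamentalDomain_measurableSet _

/-- the integer-periodization of a set -/
def msmPer {I : Type*} (S : Set (I → ℝ)) : Set (I → ℝ) :=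
  {x | ∃ z : I → ℤ, (x + fun i => (z i : ℝ)) ∈ S}

lemma msm_per_meas {I : Type*} [Fintype I] {S : Set (I → ℝ)} (hS : MeasurableSet S) :
    MeasurableSet (msmPer S) := by
  have : msmPer S = ⋃ z : I → ℤ, (fun x : I → ℝ => x + fun i => (z i : ℝ)) ⁻¹' S := by
    ext x; simp [msmPer]
  rw [this]
  exact MeasurableSet.iUnion fun z => hS.preimage (by fun_prop)

lemma msm_slice {I : Type*} [Fintype I] {S : Set (I → ℝ)} (hS : IsOpen S) (hc : Convex ℝ S)
    {t : ℝ} (ht : 1 ≤ t) :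
    volume (msmCube I ∩ msmPer S) ≤ volume (msmCube I ∩ msmPer (t • S)) := by
  rcases S.eq_empty_or_nonempty with rfl | ⟨s, hs⟩
  · simp [msmPer]
  have t0 : 0 < t := by linarith
  set c : I → ℝ := (t - 1) • s with hcdef
  let b := Pi.basisFun ℝ I
  have fd := ZSpan.isAddFundamentalDomain b volume
  have hmem : ∀ g ∈ Submodule.span ℤ (Set.range b), ∃ z : I → ℤ, g = fun i => (z i : ℝ) := by
    intro g hg
    have := (b.mem_span_iff_repr_mem ℤ g).1 hg
    choose z hz using this
    refine ⟨z, funext fun i => ?_⟩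
    have := hz i
    simpa [b] using this.symm
  have hP := msm_per_meas hS.measurableSet
  have fd2 : IsAddFundamentalDomain (Submodule.span ℤ (Set.range b))
      ((fun x : I → ℝ => x + c) ⁻¹' (ZSpan.fundamentalDomain b)) volume := by
    refine IsAddFundamentalDomain.mk' ?_ fun x => ?_
    · exact ((ZSpan.fundamentalDomain_measurableSet b).preimage (by fun_prop)).nullMeasurableSet
    · obtain ⟨g, hg, hu⟩ := ZSpan.exist_unique_vadd_mem_fundamentalDomain b (x + c)
      refine ⟨g, ?_, fun g' hg' => hu g' ?_⟩
      · simpa [Submodule.vadd_def, add_assoc] using hg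
      · simpa [Submodule.vadd_def, add_assoc] using hg'
  have : VAddInvariantMeasure (Submodule.span ℤ (Set.range b)) (I → ℝ) volume :=
    ⟨fun g s _ => measure_preimage_add volume (g : I → ℝ) s⟩
  have key : volume (msmPer S ∩ ZSpan.fundamentalDomain b) =
      volume (msmPer S ∩ ((fun x : I → ℝ => x + c) ⁻¹' (ZSpan.fundamentalDomain b))) := by
    refine fd.measure_set_eq fd2 hP fun g => ?_
    obtain ⟨z, hz⟩ := hmem g g.2
    ext x
    simp only [msmPer, Set.mem_preimage, Set.mem_ofPred_eq, Submodule.vadd_def, vadd_eq_add, hz]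
    constructor
    · rintro ⟨w, hw⟩
      refine ⟨z + w, ?_⟩
      convert hw using 1
      ext i; simp; ring
    · rintro ⟨w, hw⟩
      refine ⟨w - z, ?_⟩
      convert hw using 1
      ext i; simp; ring
  rw [Set.inter_comm, msmCube_eq, key, Set.inter_comm (ZSpan.fundamentalDomain _)]
  rw [← measure_preimage_add_right volume c (msmPer (t • S) ∩ _)]
  refine measure_mono ?_
  rintro x ⟨⟨z, hz⟩, hx⟩
  refine ⟨⟨z, ?_⟩, hx⟩
  rw [Set.mem_smul_set]
  refine ⟨t⁻¹ • (x + fun i => (z i : ℝ)) + (1 - t⁻¹) • s, ?_, ?_⟩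
  · exact hc hz hs (by positivity) (by have := inv_le_one_of_one_le₀ ht; linarith) (by ring)
  · ext i
    simp [c]
    field_simp
    ring

lemma msm_prod {I J : Type*} [Fintype I] [Fintype J] {A : Set ((I → ℝ) × (J → ℝ))}
    (hA : IsOpen A) (hc : Convex ℝ A) {t : ℝ} (ht : 1 ≤ t) :
    ENNReal.ofReal (t ^ Fintype.card J) *
      volume {p : (I → ℝ) × (J → ℝ) | p.1 ∈ msmCube I ∧ ∃ z : I → ℤ,
        (p.1 + (fun i => (z i : ℝ)), p.2) ∈ A} ≤
      volume {p : (I → ℝ) × (J → ℝ) | p.1 ∈ msmCube I ∧ ∃ z : I → ℤ,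
        (p.1 + (fun i => (z i : ℝ)), p.2) ∈ t • A} := by
  have t0 : 0 < t := by linarith
  have meas : ∀ A : Set ((I → ℝ) × (J → ℝ)), IsOpen A → 
      MeasurableSet {p : (I → ℝ) × (J → ℝ) | p.1 ∈ msmCube I ∧ ∃ z : I → ℤ,
        (p.1 + (fun i => (z i : ℝ)), p.2) ∈ A} := by
    intro A hA
    have : {p : (I → ℝ) × (J → ℝ) | p.1 ∈ msmCube I ∧ ∃ z : I → ℤ,
        (p.1 + (fun i => (z i : ℝ)), p.2) ∈ A} = Prod.fst ⁻¹' (msmCube I) ∩ 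
        ⋃ z : I → ℤ, (fun p : (I → ℝ) × (J → ℝ) => (p.1 + (fun i => (z i : ℝ)), p.2)) ⁻¹' A := by
      ext x; simp
    rw [this]
    exact ((msm_measCube I).preimage measurable_fst).inter
      (MeasurableSet.iUnion fun z => hA.measurableSet.preimage (by fun_prop))
  have hAt : IsOpen (t • A) := hA.smul₀ t0.ne'
  rw [show (volume : Measure ((I → ℝ) × (J → ℝ))) = volume.prod volume from rfl,
    Measure.prod_apply_symm (meas A hA), Measure.prod_apply_symm (meas _ hAt)]
  have hsl : ∀ (A : Set ((I → ℝ) × (J → ℝ))) (y : J → ℝ), ((fun x => (x, y)) ⁻¹' 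
      {p : (I → ℝ) × (J → ℝ) | p.1 ∈ msmCube I ∧ ∃ z : I → ℤ,
        (p.1 + (fun i => (z i : ℝ)), p.2) ∈ A}) = msmCube I ∩ msmPer ((fun x => (x, y)) ⁻¹' A) := by
    intro A y; ext x; simp [msmPer]
  have hmeasA := measurable_measure_prodMk_right (μ := (volume : Measure (I → ℝ))) (meas A hA)
  simp only [hsl] at hmeasA ⊢
  have hscale : ENNReal.ofReal (t ^ Fintype.card J) *
      ∫⁻ y : J → ℝ, volume (msmCube I ∩ msmPer ((fun x => (x, y)) ⁻¹' A)) =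
      ∫⁻ y : J → ℝ, volume (msmCube I ∩ msmPer ((fun x => (x, t⁻¹ • y)) ⁻¹' A)) := by
    have h1 := Measure.map_addHaar_smul (volume : Measure (J → ℝ)) (r := t⁻¹) (by positivity)
    have h2 := lintegral_map (μ := (volume : Measure (J → ℝ))) hmeasA 
      (g := fun y => t⁻¹ • y) (by fun_prop)
    rw [← h2, h1, lintegral_smul_measure]
    simp [abs_of_pos t0]
  rw [hscale]
  refine lintegral_mono fun y => ?_
  have e : (fun x : I → ℝ => (x, y)) ⁻¹' (t • A) = t • ((fun x => (x, t⁻¹ • y)) ⁻¹' A) := by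
    ext x
    simp [Set.mem_smul_set_iff_inv_smul_mem₀ t0.ne', Prod.smul_mk]
  rw [e]
  refine msm_slice (hA.preimage (by fun_prop)) ?_ ht
  intro a ha b hb u v hu hv huv
  have := hc ha hb hu hv huv
  simp only [Set.mem_preimage]
  convert this using 1
  ext i
  · simp
  · simp only [Prod.smul_mk, Prod.mk_add_mk, ← add_smul, huv, one_smul]

/-- reduction of `A` modulo the first `i` coordinate directions -/
def msmG {n : ℕ} (i : ℕ) (A : Set (Fin n → ℝ)) : Set (Fin n → ℝ) :=
  {x | (∀ j : Fin n, (j : ℕ) < i → 0 ≤ x j ∧ x j < 1) ∧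
    ∃ z : Fin n → ℤ, (∀ j : Fin n, i ≤ (j : ℕ) → z j = 0) ∧ (x + fun j => (z j : ℝ)) ∈ A}

lemma msmG_meas {n : ℕ} (i : ℕ) {A : Set (Fin n → ℝ)} (hA : MeasurableSet A) :
    MeasurableSet (msmG i A) := by
  have : msmG i A = (⋂ j : Fin n, ⋂ _ : (j : ℕ) < i, (fun x : Fin n → ℝ => x j) ⁻¹' (Set.Ico 0 1)) ∩
      ⋃ z : Fin n → ℤ, ⋃ _ : (∀ j : Fin n, i ≤ (j : ℕ) → z j = 0),
        (fun x : Fin n → ℝ => x + fun j => (z j : ℝ)) ⁻¹' A := by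
    ext x; simp [msmG]
  rw [this]
  refine MeasurableSet.inter ?_ ?_
  · exact MeasurableSet.iInter fun j => MeasurableSet.iInter fun _ =>
      measurableSet_Ico.preimage (by fun_prop)
  · exact MeasurableSet.iUnion fun z => MeasurableSet.iUnion fun _ => hA.preimage (by fun_prop)

lemma msm_step_b {n : ℕ} {i : ℕ} (hi : i < n) {A : Set (Fin n → ℝ)} (hA : MeasurableSet A)
    (hd : ∀ z : Fin n → ℤ, ∀ a ∈ A, ∀ a' ∈ A, a - a' = (fun j => (z j : ℝ)) →
      ∀ j : Fin n, i ≤ (j : ℕ) → z j = 0) :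
    volume (msmG i A) ≤ volume (msmG (i + 1) A) := by
  let ii : Fin n := ⟨i, hi⟩
  let e : Fin n → ℝ := Pi.single ii 1
  let P : ℤ → Set (Fin n → ℝ) := fun k => msmG i A ∩ {x | ⌊x ii⌋ = k}
  let Q : ℤ → Set (Fin n → ℝ) := fun k => (fun x => x + (k : ℝ) • e) ⁻¹' P k
  have hPm : ∀ k, MeasurableSet (P k) := fun k =>
    (msmG_meas i hA).inter ((measurableSet_singleton k).preimage
      (f := fun x : Fin n → ℝ => ⌊x ii⌋) (Int.measurable_floor.comp (measurable_pi_apply ii)))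
  have hQm : ∀ k, MeasurableSet (Q k) := fun k => (hPm k).preimage (by fun_prop)
  have hPQ : ∀ k, volume (Q k) = volume (P k) := fun k =>
    measure_preimage_add_right volume ((k : ℝ) • e) (P k)
  have hun : msmG i A ⊆ ⋃ k, P k := fun x hx => Set.mem_iUnion.2 ⟨_, hx, rfl⟩
  have hdis : Pairwise (Function.onFun Disjoint Q) := by
    intro k l hkl
    refine Set.disjoint_left.2 fun y hk hl => hkl ?_
    obtain ⟨⟨_, z, hz0, hz⟩, _⟩ := hk
    obtain ⟨⟨_, w, hw0, hw⟩, _⟩ := hl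
    have := hd (fun j => (if j = ii then k - l else 0) + z j - w j) _ hz _ hw (by
      ext j
      by_cases h : j = ii
      · subst h; simp [e]; ring
      · simp [e, h]) ii le_rfl
    simp [hz0 ii le_rfl, hw0 ii le_rfl] at this
    omega
  have hQG : ⋃ k, Q k ⊆ msmG (i + 1) A := by
    refine Set.iUnion_subset fun k y hy => ?_
    obtain ⟨⟨h1, z, hz0, hz⟩, hf⟩ := hy
    refine ⟨fun j hj => ?_, (fun j => (if j = ii then k else 0) + z j), fun j hj => ?_, ?_⟩
    · by_cases h : j = ii
      · subst h
        simp only [Set.mem_ofPred_eq, e, Pi.add_apply, Pi.smul_apply, Pi.single_eq_same, smul_eq_mul,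
          mul_one, Int.floor_add_intCast] at hf
        have : ⌊y ii⌋ = 0 := by omega
        exact Int.floor_eq_zero_iff.1 this
      · have hj' : (j : ℕ) < i := by
          have : (j : ℕ) ≠ i := fun h' => h (Fin.ext h')
          omega
        have := h1 j hj'
        simpa [e, h] using this
    · have h : j ≠ ii := by rintro rfl; simp [ii] at hj
      simp [h, hz0 j (by omega)]
    · convert hz using 1
      ext j
      by_cases h : j = ii
      · subst h; simp [e]; ring
      · simp [e, h]
  calc volume (msmG i A) ≤ volume (⋃ k, P k) := measure_mono hun
    _ ≤ ∑' k, volume (P k) := measure_iUnion_le _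
    _ = ∑' k, volume (Q k) := by simp only [hPQ]
    _ = volume (⋃ k, Q k) := (measure_iUnion hdis hQm).symm
    _ ≤ _ := measure_mono hQG

lemma msm_step_c {n : ℕ} {i : ℕ} (hi : i ≤ n) {A : Set (Fin n → ℝ)} (hA : IsOpen A)
    (hc : Convex ℝ A) {t : ℝ} (ht : 1 ≤ t) :
    ENNReal.ofReal (t ^ (n - i)) * volume (msmG i A) ≤ volume (msmG i (t • A)) := by
  have t0 : 0 < t := by linarith
  let p : Fin n → Prop := fun j => (j : ℕ) < i
  let E := MeasurableEquiv.piEquivPiSubtypeProd (fun _ : Fin n => ℝ) p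
  have hE : MeasurePreserving E := volume_preserving_piEquivPiSubtypeProd (fun _ : Fin n => ℝ) p
  have hcard : Fintype.card {j // ¬ p j} = n - i := by
    rw [Fintype.card_subtype_compl, Fintype.card_fin]
    congr 1
    rw [Fintype.card_subtype]
    have : (Finset.univ.filter p) = (Finset.univ.filter fun j : Fin n => (j : ℕ) < i) := rfl
    rw [this, Fin.card_filter_val_lt]
    omega
  have hEs : ∀ q j, E.symm q j = if h : p j then q.1 ⟨j, h⟩ else q.2 ⟨j, h⟩ := fun q j => rfl
  have hE1 : ∀ x (j : {j // p j}), (E x).1 j = x j := fun x j => rfl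
  have hE2 : ∀ x (j : {j // ¬ p j}), (E x).2 j = x j := fun x j => rfl
  have hG : ∀ A : Set (Fin n → ℝ), msmG i A = E ⁻¹' {q | q.1 ∈ msmCube _ ∧ 
      ∃ z : {j // p j} → ℤ, (q.1 + (fun i => (z i : ℝ)), q.2) ∈ E.symm ⁻¹' A} := by
    intro A
    ext x
    simp only [msmG, Set.mem_ofPred_eq, Set.mem_preimage, msmCube, hE1]
    refine and_congr ⟨fun h j => h j j.2, fun h j hj => h ⟨j, hj⟩⟩ ⟨?_, ?_⟩
    · rintro ⟨z, hz, hm⟩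
      refine ⟨fun j => z j, ?_⟩
      convert hm using 1
      ext j
      rw [hEs]
      by_cases h : p j
      · simp [h, hE1]
      · simp [h, hE2, hz j (by simpa [p] using h)]
    · rintro ⟨z, hm⟩
      refine ⟨fun j => if h : p j then z ⟨j, h⟩ else 0, fun j hj => ?_, ?_⟩
      · have : ¬ p j := by simpa [p] using hj
        simp [this]
      · convert hm using 1
        ext j
        rw [hEs]
        by_cases h : p j
        · simp [h, hE1]
        · simp [h, hE2]
  have hlin1 : ∀ (c : ℝ) q, E.symm (c • q) = c • E.symm q := by
    intro c q; ext j; simp only [hEs, Pi.smul_apply]; split_ifs <;> simp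
  have hlin2 : ∀ q r, E.symm (q + r) = E.symm q + E.symm r := by
    intro q r; ext j; simp only [hEs, Pi.add_apply]; split_ifs <;> simp
  have hcont : Continuous E.symm := by
    refine continuous_pi fun j => ?_
    simp only [hEs]
    split_ifs <;> fun_prop
  have hsm : E.symm ⁻¹' (t • A) = t • (E.symm ⁻¹' A) := by
    ext q
    simp [Set.mem_smul_set_iff_inv_smul_mem₀ t0.ne', hlin1]
  rw [hG, hG, hE.measure_preimage_equiv, hE.measure_preimage_equiv, hsm, ← hcard]
  refine msm_prod (hA.preimage hcont) ?_ ht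
  intro a ha b hb u v hu hv huv
  have := hc ha hb hu hv huv
  simpa [hlin1, hlin2] using this

lemma msm_core {n : ℕ} (hn : 1 ≤ n) {A : Set (Fin n → ℝ)} (hA : IsOpen A)
    (hc : Convex ℝ A) (hs : ∀ x ∈ A, -x ∈ A) (m : ℕ → ℝ) (hpos : ∀ i < n, 0 < m i)
    (hmono : ∀ i, i + 1 < n → m i ≤ m (i + 1))
    (hd : ∀ i < n, ∀ z : Fin n → ℤ, (fun j => (z j : ℝ)) ∈ m i • A →
      ∀ j : Fin n, i ≤ (j : ℕ) → z j = 0) :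
    ENNReal.ofReal (∏ i ∈ Finset.range n, m i) * volume A ≤ 2 ^ n := by
  have hopen : ∀ i < n, IsOpen ((m i / 2) • A) := fun i hi =>
    hA.smul₀ (by have := hpos i hi; positivity)
  have hd' : ∀ i < n, ∀ z : Fin n → ℤ, ∀ a ∈ (m i / 2) • A, ∀ a' ∈ (m i / 2) • A,
      a - a' = (fun j => (z j : ℝ)) → ∀ j : Fin n, i ≤ (j : ℕ) → z j = 0 := by
    rintro i hi z _ ⟨a, ha, rfl⟩ _ ⟨a', ha', rfl⟩ h
    refine hd i hi z ?_
    rw [← h]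
    refine ⟨(1 / 2 : ℝ) • a + (1 / 2 : ℝ) • (-a'), hc ha (hs _ ha') (by norm_num) (by norm_num)
      (by norm_num), ?_⟩
    ext j
    simp
    ring
  have main : ∀ i, i < n → ENNReal.ofReal ((∏ j ∈ Finset.range i, m j) * m i ^ (n - i) / 2 ^ n) *
      volume A ≤ volume (msmG i ((m i / 2) • A)) := by
    intro i
    induction i with
    | zero =>
      intro h
      have h0 := hpos 0 h
      have : msmG 0 ((m 0 / 2) • A) = (m 0 / 2) • A := by
        ext x
        simp only [msmG, Set.mem_ofPred_eq]
        constructor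
        · rintro ⟨_, z, hz, hm⟩
          have : x = x + fun j => (z j : ℝ) := by ext j; simp [hz j]
          rwa [this]
        · intro hx
          refine ⟨by simp, 0, by simp, ?_⟩
          convert hx using 1
          ext j; simp
      rw [this, Measure.addHaar_smul]
      rw [abs_of_pos (by positivity)]
      simp [div_pow]
    | succ i ih =>
      intro h
      have hi : i < n := by omega
      have h0 := hpos i hi
      have h1 := hpos _ h
      have ht : 1 ≤ m (i + 1) / m i := (one_le_div h0).2 (hmono i h)
      have hb := msm_step_b hi (hopen i hi).measurableSet (hd' i hi)
      have hcc := msm_step_c h.le (hopen i hi) (hc.smul _) ht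
      rw [smul_smul, show m (i + 1) / m i * (m i / 2) = m (i + 1) / 2 by field_simp] at hcc
      refine le_trans ?_ hcc
      refine le_trans ?_ (mul_le_mul_right ((ih hi).trans hb) _)
      rw [← mul_assoc, ← ENNReal.ofReal_mul (by positivity)]
      refine le_of_eq ?_
      congr 2
      rw [Finset.prod_range_succ, show n - i = (n - (i + 1)) + 1 by omega, pow_succ, div_pow]
      field_simp
  obtain ⟨k, rfl⟩ : ∃ k, n = k + 1 := ⟨n - 1, by omega⟩
  have h1 := (main k (by omega)).trans
    (msm_step_b (by omega) (hopen k (by omega)).measurableSet (hd' k (by omega)))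
  have h2 : volume (msmG (k + 1) ((m k / 2) • A)) ≤ 1 := by
    calc volume (msmG (k + 1) ((m k / 2) • A)) 
        ≤ volume (Set.univ.pi fun _ : Fin (k + 1) => Set.Ico (0 : ℝ) 1) :=
          measure_mono fun x hx j _ => hx.1 j j.2
      _ = 1 := by rw [volume_pi_pi]; simp
  have h3 := h1.trans h2
  rw [show k + 1 - k = 1 by omega, pow_one, ← Finset.prod_range_succ,
    ENNReal.ofReal_div_of_pos (by positivity), ENNReal.ofReal_pow (by norm_num)] at h3
  simp only [ENNReal.ofReal_ofNat] at h3
  rw [div_eq_mul_inv, mul_right_comm, ← div_eq_mul_inv] at h3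
  have := (ENNReal.div_le_iff (by positivity) (by simp)).1 h3
  simpa using this

lemma msm_basis {n : ℕ} (V : Matrix (Fin n) (Fin n) ℤ) (hV : V.det ≠ 0) :
    ∃ U U' : Matrix (Fin n) (Fin n) ℤ, U * U' = 1 ∧ ∀ (k : ℕ) (x : Fin n → ℤ),
      (∀ j : Fin n, k ≤ (j : ℕ) → (V.adjugate.mulVec x) j = 0) →
      ∀ j : Fin n, k ≤ (j : ℕ) → (U'.mulVec x) j = 0 := by
  set M := V.adjugate with hM
  have hinj : ∀ x, M.mulVec x = 0 → x = 0 := by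
    intro x hx
    have h : (V * M).mulVec x = 0 := by rw [← Matrix.mulVec_mulVec, hx, Matrix.mulVec_zero]
    rw [hM, Matrix.mul_adjugate, Matrix.smul_mulVec, Matrix.one_mulVec] at h
    exact (smul_eq_zero.1 h).resolve_left hV
  have hgen : ∀ i : Fin n, ∃ b : Fin n → ℤ, (∀ j, i < j → M.mulVec b j = 0) ∧
      M.mulVec b i ≠ 0 ∧
      ∀ x, (∀ j, i < j → M.mulVec x j = 0) → M.mulVec b i ∣ M.mulVec x i := by
    intro i
    let S : Submodule ℤ (Fin n → ℤ) :=
      { carrier := {x | ∀ j, i < j → M.mulVec x j = 0}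
        add_mem' := by
          intro a b ha hb j hj
          simp [Matrix.mulVec_add, ha j hj, hb j hj]
        zero_mem' := by intro j _; simp
        smul_mem' := by
          intro c a ha j hj
          rw [Matrix.mulVec_smul, Pi.smul_apply, ha j hj, smul_zero] }
    let I : Ideal ℤ := S.map ((LinearMap.proj i).comp M.mulVecLin)
    obtain ⟨g, hg⟩ := (IsPrincipalIdealRing.principal I).principal
    have hgI : g ∈ I := by rw [hg]; exact Submodule.mem_span_singleton_self g
    obtain ⟨b, hbS, hb⟩ := hgI
    have hb' : M.mulVec b i = g := hb
    have hdvd : ∀ x, (∀ j, i < j → M.mulVec x j = 0) → M.mulVec b i ∣ M.mulVec x i := by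
      intro x hx
      have : M.mulVec x i ∈ I := ⟨x, hx, rfl⟩
      rw [hg] at this
      rw [hb']
      exact Ideal.mem_span_singleton.1 this
    refine ⟨b, hbS, fun h0 => ?_, hdvd⟩
    have hx : M.mulVec (V.mulVec (Pi.single i 1)) = V.det • Pi.single i 1 := by
      rw [Matrix.mulVec_mulVec, hM, Matrix.adjugate_mul, Matrix.smul_mulVec, Matrix.one_mulVec]
    have := hdvd (V.mulVec (Pi.single i 1)) (by
      intro j hj
      rw [hx]
      simp [hj.ne'])
    rw [h0, hx] at this
    simp at this
    exact hV this
  choose b hb1 hb2 hb3 using hgen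
  let U : Matrix (Fin n) (Fin n) ℤ := Matrix.of fun a k => b k a
  have hcol : ∀ i, U.mulVec (Pi.single i 1) = b i := by
    intro i; ext a; simp [U]
  have hind : ∀ k, k ≤ n → ∀ x, (∀ j : Fin n, k ≤ (j : ℕ) → M.mulVec x j = 0) →
      ∃ w : Fin n → ℤ, (∀ j : Fin n, k ≤ (j : ℕ) → w j = 0) ∧ U.mulVec w = x := by
    intro k
    induction k with
    | zero =>
      intro _ x hx
      refine ⟨0, by simp, ?_⟩
      rw [hinj x (funext fun j => hx j (Nat.zero_le _))]
      simp
    | succ k ih =>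
      intro hk x hx
      let i : Fin n := ⟨k, hk⟩
      obtain ⟨c, hc⟩ := hb3 i x (fun j hj => hx j hj)
      obtain ⟨w, hw0, hw⟩ := ih (by omega) (x - c • b i) (by
        intro j hj
        rw [Matrix.mulVec_sub, Matrix.mulVec_smul]
        rcases Nat.eq_or_lt_of_le hj with h | h
        · have : j = i := Fin.ext h.symm
          subst this
          simp [hc]; ring
        · simp [hx j h, hb1 i j h])
      refine ⟨w + c • Pi.single i 1, ?_, ?_⟩
      · intro j hj
        have : j ≠ i := by rintro rfl; simp [i] at hj
        simp [hw0 j (by omega), this]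
      · rw [Matrix.mulVec_add, Matrix.mulVec_smul, hcol, hw]; simp
  choose w hw using fun j : Fin n => hind n le_rfl (Pi.single j 1) (fun j hj => by omega)
  let U' : Matrix (Fin n) (Fin n) ℤ := Matrix.of fun a k => w k a
  have hUU : U * U' = 1 := by
    refine Matrix.ext_of_mulVec_single fun j => ?_
    rw [← Matrix.mulVec_mulVec, Matrix.one_mulVec]
    have : U'.mulVec (Pi.single j 1) = w j := by ext a; simp [U']
    rw [this, (hw j).2]
  have hUU' : U' * U = 1 := mul_eq_one_comm.1 hUU
  refine ⟨U, U', hUU, fun k x hx j hj => ?_⟩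
  obtain ⟨y, hy0, hy⟩ := hind (min k n) (min_le_right _ _) x (fun j hj => hx j (by omega))
  rw [← hy, Matrix.mulVec_mulVec, hUU', Matrix.one_mulVec]
  exact hy0 j (by omega)

/-- cast of an integer vector -/
def msmC {n : ℕ} (z : Fin n → ℤ) : Fin n → ℝ := fun j => (z j : ℝ)

lemma msm_finite {n : ℕ} {D : Set (Fin n → ℝ)} (hcpt : IsCompact D) (h0 : D ∈ nhds 0) (a : ℝ) :
    {z : Fin n → ℤ | gauge D (msmC z) ≤ a}.Finite := by
  obtain ⟨r, hr⟩ := hcpt.isBounded.subset_closedBall 0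
  have hr' : D ⊆ Metric.closedBall 0 (max r 1) :=
    hr.trans (Metric.closedBall_subset_closedBall (le_max_left _ _))
  have hpos : 0 < max r 1 := lt_of_lt_of_le one_pos (le_max_right _ _)
  set R := max r 1
  refine (Set.finite_Icc (fun _ : Fin n => -⌈a * R⌉) (fun _ => ⌈a * R⌉)).subset ?_
  intro z hz
  have h1 := le_gauge_of_subset_closedBall (x := msmC z) (absorbent_nhds_zero h0) hpos.le hr'
  have h2 : ‖msmC z‖ ≤ a * R := (div_le_iff₀ hpos).1 (h1.trans hz)
  have h3 : ∀ j, |z j| ≤ ⌈a * R⌉ := by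
    intro j
    have h4 := (norm_le_pi_norm (msmC z) j).trans (h2.trans (Int.le_ceil _))
    simp only [msmC, Real.norm_eq_abs] at h4
    exact_mod_cast h4
  exact ⟨fun j => (abs_le.1 (h3 j)).1, fun j => (abs_le.1 (h3 j)).2⟩

lemma msm_greedy {n : ℕ} {D : Set (Fin n → ℝ)} (hcpt : IsCompact D) (h0 : D ∈ nhds 0) :
    ∃ v : ℕ → (Fin n → ℤ), ∀ j < n,
      msmC (v j) ∉ Submodule.span ℝ ((fun i => msmC (v i)) '' Set.Iio j) ∧
      ∀ z, msmC z ∉ Submodule.span ℝ ((fun i => msmC (v i)) '' Set.Iio j) →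
        gauge D (msmC (v j)) ≤ gauge D (msmC z) := by
  suffices H : ∀ k ≤ n, ∃ v : ℕ → (Fin n → ℤ), ∀ j < k,
      msmC (v j) ∉ Submodule.span ℝ ((fun i => msmC (v i)) '' Set.Iio j) ∧
      ∀ z, msmC z ∉ Submodule.span ℝ ((fun i => msmC (v i)) '' Set.Iio j) →
        gauge D (msmC (v j)) ≤ gauge D (msmC z) from H n le_rfl
  intro k
  induction k with
  | zero => intro _; exact ⟨fun _ => 0, by simp⟩
  | succ k ih =>
    intro hk
    obtain ⟨v, hv⟩ := ih (by omega)
    set W := Submodule.span ℝ ((fun i => msmC (v i)) '' Set.Iio k) with hW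
    have hex : ∃ z0 : Fin n → ℤ, msmC z0 ∉ W := by
      by_contra! hcon
      have htop : W = ⊤ := by
        rw [eq_top_iff, ← (Pi.basisFun ℝ (Fin n)).span_eq, Submodule.span_le]
        rintro _ ⟨i, rfl⟩
        have := hcon (Pi.single i 1)
        have he : msmC (Pi.single i 1) = Pi.basisFun ℝ (Fin n) i := by
          ext j
          by_cases h : j = i
          · subst h; simp [msmC]
          · simp [msmC, h]
        rw [← he]
        exact this
      have h1 : Module.finrank ℝ W ≤ k := by
        have himg : ((fun i => msmC (v i)) '' Set.Iio k) =
            (((Finset.range k).image (fun i => msmC (v i)) : Finset _) : Set (Fin n → ℝ)) := by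
          ext x; simp
        rw [hW, himg]
        exact (finrank_span_finset_le_card _).trans (Finset.card_image_le.trans (by simp))
      rw [htop, finrank_top, Module.finrank_fin_fun] at h1
      omega
    obtain ⟨z0, hz0⟩ := hex
    obtain ⟨z1, ⟨hz1, hz1W⟩, hmin⟩ := Set.exists_min_image
      ({z : Fin n → ℤ | gauge D (msmC z) ≤ gauge D (msmC z0)} ∩ {z | msmC z ∉ W})
      (fun z => gauge D (msmC z)) ((msm_finite hcpt h0 _).inter_of_left _) ⟨z0, le_refl (gauge D (msmC z0)), hz0⟩
    have hupd : ∀ j ≤ k, ((fun i => msmC (Function.update v k z1 i)) '' Set.Iio j) =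
        ((fun i => msmC (v i)) '' Set.Iio j) := by
      intro j hj
      refine Set.image_congr fun i hi => ?_
      have : i ≠ k := by have := Set.mem_Iio.1 hi; omega
      simp [this]
    refine ⟨Function.update v k z1, fun j hj => ?_⟩
    rw [hupd j (by omega)]
    rcases Nat.lt_succ_iff_lt_or_eq.1 hj with h | rfl
    · simpa [h.ne] using hv j h
    · simp only [Function.update_self]
      refine ⟨hz1W, fun z hz => ?_⟩
      by_cases hle : gauge D (msmC z) ≤ gauge D (msmC z0)
      · exact hmin z ⟨hle, hz⟩
      · exact le_trans (show gauge D (msmC z1) ≤ gauge D (msmC z0) from hz1) (not_le.1 hle).le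

lemma msm_indep {n : ℕ} {v : ℕ → (Fin n → ℤ)} (hv : ∀ j < n,
      msmC (v j) ∉ Submodule.span ℝ ((fun i => msmC (v i)) '' Set.Iio j)) (k : ℕ) (hk : k ≤ n) :
    LinearIndependent ℝ (fun i : Fin k => msmC (v i)) := by
  induction k with
  | zero => exact linearIndependent_empty_type
  | succ k ih =>
    have : (fun i : Fin (k + 1) => msmC (v i)) =
        Fin.snoc (fun i : Fin k => msmC (v i)) (msmC (v k)) := by
      ext i
      refine Fin.lastCases ?_ (fun i => ?_) i <;> simp
    rw [this, linearIndependent_finSnoc]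
    refine ⟨ih (by omega), ?_⟩
    have hr : Set.range (fun i : Fin k => msmC (v i)) = (fun i => msmC (v i)) '' Set.Iio k := by
      ext x
      constructor
      · rintro ⟨i, rfl⟩; exact ⟨i, i.2, rfl⟩
      · rintro ⟨i, hi, rfl⟩; exact ⟨⟨i, hi⟩, rfl⟩
    rw [hr]
    exact hv k (by omega)

lemma msm_mulVec_cast {n : ℕ} (U : Matrix (Fin n) (Fin n) ℤ) (z : Fin n → ℤ) :
    msmC (U.mulVec z) = (U.map (Int.cast : ℤ → ℝ)).mulVec (msmC z) := by
  ext j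
  simp [msmC, Matrix.mulVec, dotProduct]

lemma msm_upper {n : ℕ} (hn : 1 ≤ n) {D : Set (Fin n → ℝ)} (hc : Convex ℝ D)
    (h0 : D ∈ nhds 0) (hs : ∀ x ∈ D, -x ∈ D) {v : ℕ → (Fin n → ℤ)}
    (hdet : (Matrix.of fun a (k : Fin n) => v k a : Matrix (Fin n) (Fin n) ℤ).det ≠ 0)
    (hpos : ∀ j < n, 0 < gauge D (msmC (v j)))
    (hmono : ∀ j, j + 1 < n → gauge D (msmC (v j)) ≤ gauge D (msmC (v (j + 1))))
    (hv : ∀ j < n, ∀ z, gauge D (msmC z) < gauge D (msmC (v j)) →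
      msmC z ∈ Submodule.span ℝ ((fun i => msmC (v i)) '' Set.Iio j)) :
    ENNReal.ofReal (∏ i ∈ Finset.range n, gauge D (msmC (v i))) * volume D ≤ 2 ^ n := by
  set V : Matrix (Fin n) (Fin n) ℤ := Matrix.of fun a (k : Fin n) => v k a with hVdef
  obtain ⟨U, U', hUU, hU⟩ := msm_basis V hdet
  have hUU' : U' * U = 1 := mul_eq_one_comm.1 hUU
  let UR : Matrix (Fin n) (Fin n) ℝ := U.map (Int.cast : ℤ → ℝ)
  let f : (Fin n → ℝ) →ₗ[ℝ] (Fin n → ℝ) := Matrix.toLin' UR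
  have hdetf : |LinearMap.det f| = 1 := by
    have h1 : U.det * U'.det = 1 := by rw [← Matrix.det_mul, hUU, Matrix.det_one]
    have h2 : |U.det| = 1 := Int.isUnit_iff_abs_eq.1 (IsUnit.of_mul_eq_one _ h1)
    have h3 : UR.det = ((U.det : ℤ) : ℝ) := ((Int.castRingHom ℝ).map_det U).symm
    rw [LinearMap.det_toLin', h3, ← Int.cast_abs, h2, Int.cast_one]
  have hf0 : LinearMap.det f ≠ 0 := by
    intro h; rw [h] at hdetf; simp at hdetf
  have hvol : volume (f ⁻¹' (interior D)) = volume D := by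
    rw [Measure.addHaar_preimage_linearMap volume hf0, abs_inv, hdetf]
    simp only [inv_one, ENNReal.ofReal_one, one_mul]
    exact measure_congr (interior_ae_eq_of_null_frontier (hc.addHaar_frontier volume))
  rw [← hvol]
  refine msm_core hn (isOpen_interior.preimage f.continuous_of_finiteDimensional)
    (hc.interior.linear_preimage f) ?_ (fun i => gauge D (msmC (v i))) hpos hmono ?_
  · intro x hx
    rw [Set.mem_preimage, map_neg]
    have h1 : f x ∈ interior D := hx
    have h2 : -interior D ⊆ interior D := by
      refine interior_maximal ?_ isOpen_interior.neg
      intro y hy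
      have h3 : -y ∈ interior D := hy
      simpa using hs _ (interior_subset h3)
    exact h2 (by simpa using h1)
  · intro i hi z hz j hj
    have h1 : gauge D (msmC (U.mulVec z)) < gauge D (msmC (v i)) := by
      obtain ⟨y, hy, hyz⟩ := hz
      have h2 : msmC (U.mulVec z) = gauge D (msmC (v i)) • f y := by
        rw [msm_mulVec_cast, ← map_smul]
        change f (msmC z) = _
        congr 1
        exact hyz.symm
      rw [h2, gauge_smul_of_nonneg (hpos i hi).le, smul_eq_mul]
      have h3 := (gauge_lt_one_iff_mem_interior hc h0).2 hy
      nlinarith [hpos i hi]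
    have h2 := hv i hi _ h1
    have h3 := hU i (U.mulVec z) (by
      intro j hj
      let VR : Matrix (Fin n) (Fin n) ℝ := V.map (Int.cast : ℤ → ℝ)
      let φ : (Fin n → ℝ) →ₗ[ℝ] ℝ :=
        (LinearMap.proj j).comp (V.adjugate.map (Int.cast : ℤ → ℝ)).mulVecLin
      have hle : Submodule.span ℝ ((fun i => msmC (v i)) '' Set.Iio i) ≤ LinearMap.ker φ := by
        rw [Submodule.span_le]
        rintro _ ⟨l, hl, rfl⟩
        have hl' : l < i := hl
        have hvl : v l = V.mulVec (Pi.single ⟨l, by omega⟩ 1) := by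
          ext a; simp [V]
        have hjl : j ≠ ⟨l, by omega⟩ := by
          intro h
          have := congrArg Fin.val h
          simp only at this
          omega
        change (V.adjugate.map (Int.cast : ℤ → ℝ)).mulVec (msmC (v l)) j = 0
        rw [← msm_mulVec_cast, hvl, Matrix.mulVec_mulVec, Matrix.adjugate_mul, Matrix.smul_mulVec,
          Matrix.one_mulVec]
        simp [msmC, hjl]
      have h4 : (V.adjugate.map (Int.cast : ℤ → ℝ)).mulVec (msmC (U.mulVec z)) j = 0 := hle h2
      rw [← msm_mulVec_cast] at h4
      simpa [msmC] using h4) j hj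
    rwa [Matrix.mulVec_mulVec, hUU', Matrix.one_mulVec] at h3

lemma msm_lower {n : ℕ} {D : Set (Fin n → ℝ)} (hc : Convex ℝ D) (hcl : IsClosed D)
    (h0 : D ∈ nhds 0) (hs : ∀ x ∈ D, -x ∈ D) {v : ℕ → (Fin n → ℤ)}
    (hdet : (Matrix.of fun a (k : Fin n) => v k a : Matrix (Fin n) (Fin n) ℤ).det ≠ 0)
    (hpos : ∀ j < n, 0 < gauge D (msmC (v j))) :
    ENNReal.ofReal (2 ^ n / (Nat.factorial n : ℝ) * 
      (∏ i : Fin n, gauge D (msmC (v i)))⁻¹) ≤ volume D := by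
  set V : Matrix (Fin n) (Fin n) ℤ := Matrix.of fun a (k : Fin n) => v k a with hVdef
  let ν : Fin n → ℝ := fun i => gauge D (msmC (v i))
  have hν : ∀ i, 0 < ν i := fun i => hpos i i.2
  let W : Matrix (Fin n) (Fin n) ℝ := V.map (Int.cast : ℤ → ℝ) * Matrix.diagonal (fun i => (ν i)⁻¹)
  let f : (Fin n → ℝ) →ₗ[ℝ] (Fin n → ℝ) := Matrix.toLin' W
  let X : Set (Fin n → ℝ) := {x | ∑ i, |x i| ^ (1 : ℝ) < 1}
  have hX : volume X = ENNReal.ofReal (2 ^ n / (Nat.factorial n : ℝ)) := by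
    have := volume_sum_rpow_lt_one (Fin n) (p := 1) le_rfl
    rw [this]
    simp [Real.Gamma_nat_eq_factorial]
    norm_num
  have hsub : f '' X ⊆ D := by
    rintro _ ⟨x, hx, rfl⟩
    have hx' : ∑ i, |x i| < 1 := by simpa [X] using hx
    have habs := absorbent_nhds_zero (𝕜 := ℝ) h0
    have hfx : f x = ∑ i, x i • ((ν i)⁻¹ • msmC (v i)) := by
      ext a
      have h1 : f x a = ∑ i, W a i * x i := rfl
      rw [h1, Finset.sum_apply]
      refine Finset.sum_congr rfl fun i _ => ?_
      simp only [W, Matrix.mul_diagonal, V, Matrix.map_apply, Matrix.of_apply, Pi.smul_apply,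
        smul_eq_mul, msmC]
      ring
    have hbal := (balanced_iff_neg_mem hc).2 (fun x hx => hs x hx)
    have h1 : gauge D (f x) ≤ 1 := by
      rw [hfx]
      refine (gauge_sum_le hc habs _ _).trans ?_
      refine le_trans (le_of_eq ?_) hx'.le
      refine Finset.sum_congr rfl fun i _ => ?_
      rw [gauge_smul hbal, gauge_smul_of_nonneg (inv_nonneg.2 (hν i).le), smul_eq_mul,
        Real.norm_eq_abs]
      change |x i| * ((ν i)⁻¹ * ν i) = _
      rw [inv_mul_cancel₀ (hν i).ne', mul_one]
    have := (gauge_le_one_iff_mem_closure hc h0).1 h1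
    rwa [hcl.closure_eq] at this
  have hdetW : (∏ i, ν i)⁻¹ ≤ |LinearMap.det f| := by
    have h3 : (V.map (Int.cast : ℤ → ℝ)).det = ((V.det : ℤ) : ℝ) := 
      ((Int.castRingHom ℝ).map_det V).symm
    have hpp : 0 < ∏ i, ν i := Finset.prod_pos fun i _ => hν i
    rw [LinearMap.det_toLin', Matrix.det_mul, h3, Matrix.det_diagonal, Finset.prod_inv_distrib,
      abs_mul, abs_of_pos (inv_pos.2 hpp)]
    have : (1 : ℝ) ≤ |((V.det : ℤ) : ℝ)| := by
      rw [← Int.cast_abs]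
      exact_mod_cast Int.one_le_abs hdet
    exact le_mul_of_one_le_left (inv_pos.2 hpp).le this
  refine le_trans ?_ (measure_mono hsub)
  rw [Measure.addHaar_image_linearMap, hX, ← ENNReal.ofReal_mul (abs_nonneg _)]
  refine ENNReal.ofReal_le_ofReal ?_
  rw [mul_comm]
  exact mul_le_mul_of_nonneg_right hdetW (by positivity)

theorem minkowski_successive_minima (n : ℕ) (hn : 1 ≤ n)
    (B : Matrix (Fin n) (Fin n) ℝ) (hB : B.det ≠ 0)
    (C : Set (Fin n → ℝ)) (hconv : Convex ℝ C) (hcpt : IsCompact C)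
    (hsymm : C = -C) (h0 : (0 : Fin n → ℝ) ∈ interior C)
    (μ : Fin n → ℝ)
    (hμ : ∀ j : Fin n, μ j = sInf { l : ℝ | 0 < l ∧
        ∃ v : Fin ((j : ℕ) + 1) → (Fin n → ℝ), LinearIndependent ℝ v ∧
          ∀ i, v i ∈ l • C ∧ ∃ m : Fin n → ℤ,
            v i = B.mulVec (fun k => (m k : ℝ)) }) :
    2 ^ n / (Nat.factorial n : ℝ) ≤ (∏ j, μ j) * (volume C).toReal / |B.det| ∧
    (∏ j, μ j) * (volume C).toReal / |B.det| ≤ 2 ^ n := by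
  let f : (Fin n → ℝ) →ₗ[ℝ] (Fin n → ℝ) := Matrix.toLin' B
  have hf : LinearMap.det f ≠ 0 := by rwa [LinearMap.det_toLin']
  let F := (f.equivOfDetNeZero hf).toContinuousLinearEquiv
  have hF : ∀ x, F x = B.mulVec x := fun x => rfl
  let D : Set (Fin n → ℝ) := F ⁻¹' C
  have hDc : Convex ℝ D := hconv.linear_preimage f
  have hDcpt : IsCompact D := F.toHomeomorph.isCompact_preimage.2 hcpt
  have hD0 : D ∈ nhds 0 := by
    refine F.continuous.continuousAt.preimage_mem_nhds ?_
    rw [map_zero]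
    exact mem_interior_iff_mem_nhds.1 h0
  have hDs : ∀ x ∈ D, -x ∈ D := by
    intro x hx
    have hx' : F x ∈ C := hx
    change F (-x) ∈ C
    rw [map_neg, hsymm]
    simpa using hx'
  have hvol : volume D = ENNReal.ofReal |B.det|⁻¹ * volume C := by
    have := Measure.addHaar_preimage_linearMap volume hf C
    rw [LinearMap.det_toLin', abs_inv] at this
    exact this
  have hvol' : (volume D).toReal = (volume C).toReal / |B.det| := by
    rw [hvol, ENNReal.toReal_mul, ENNReal.toReal_ofReal (by positivity)]
    ring
  have habs := absorbent_nhds_zero (𝕜 := ℝ) hD0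
  have hmem : ∀ l : ℝ, 0 < l → ∀ x, F x ∈ l • C ↔ gauge D x ≤ l := by
    intro l hl x
    rw [Set.mem_smul_set_iff_inv_smul_mem₀ hl.ne', ← map_smul]
    change l⁻¹ • x ∈ D ↔ _
    rw [← hDcpt.isClosed.closure_eq, ← gauge_le_one_iff_mem_closure hDc hD0, hDcpt.isClosed.closure_eq,
      gauge_smul_of_nonneg (inv_nonneg.2 hl.le), smul_eq_mul, inv_mul_le_iff₀ hl, mul_one]
  obtain ⟨v, hv⟩ := msm_greedy hDcpt hD0
  have hind := msm_indep (fun j hj => (hv j hj).1)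
  have hpos : ∀ j < n, 0 < gauge D (msmC (v j)) := by
    intro j hj
    refine (gauge_pos habs (NormedSpace.isVonNBounded_of_isBounded ℝ hDcpt.isBounded)).2 fun h => ?_
    exact (hv j hj).1 (by rw [h]; exact Submodule.zero_mem _)
  have hmono1 : ∀ j, j + 1 < n → gauge D (msmC (v j)) ≤ gauge D (msmC (v (j + 1))) := by
    intro j hj
    refine (hv j (by omega)).2 _ fun h => (hv (j + 1) hj).1 ?_
    exact Submodule.span_mono (Set.image_mono (Set.Iio_subset_Iio (by omega))) h
  have hmono : ∀ j, j < n → ∀ i ≤ j, gauge D (msmC (v i)) ≤ gauge D (msmC (v j)) := by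
    intro j hj i hij
    induction j, hij using Nat.le_induction with
    | base => exact le_rfl
    | succ k hk ih => exact (ih (by omega)).trans (hmono1 k hj)
  have hspan : ∀ j < n, ∀ z, gauge D (msmC z) < gauge D (msmC (v j)) →
      msmC z ∈ Submodule.span ℝ ((fun i => msmC (v i)) '' Set.Iio j) := by
    intro j hj z hz
    by_contra h
    exact absurd ((hv j hj).2 z h) (not_le.2 hz)
  have hμ' : ∀ j : Fin n, μ j = gauge D (msmC (v j)) := by
    intro j
    rw [hμ j]
    refine IsLeast.csInf_eq ⟨⟨hpos j j.2, fun i => F (msmC (v i)), ?_, fun i => ⟨?_, v i, rfl⟩⟩, ?_⟩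
    · exact (hind (j + 1) j.2).map' F.toLinearEquiv.toLinearMap (LinearEquiv.ker _)
    · exact (hmem _ (hpos j j.2) _).2 (hmono j j.2 i (by omega))
    · rintro l ⟨hl, w, hw, hwm⟩
      by_contra! hlt
      choose hwC m hm using hwm
      have hw' : LinearIndependent ℝ (fun i => msmC (m i)) := by
        refine LinearIndependent.of_comp F.toLinearEquiv.toLinearMap ?_
        have he : (F.toLinearEquiv.toLinearMap ∘ fun i => msmC (m i)) = w :=
          funext fun i => (hm i).symm
        rw [he]
        exact hw
      have hin : ∀ i, msmC (m i) ∈ Submodule.span ℝ ((fun i => msmC (v i)) '' Set.Iio (j : ℕ)) := by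
        intro i
        refine hspan j j.2 _ (lt_of_le_of_lt ((hmem l hl _).1 ?_) hlt)
        have := hwC i
        rw [hm i] at this
        exact this
      have hle : Submodule.span ℝ (Set.range fun i => msmC (m i)) ≤ 
          Submodule.span ℝ ((fun i => msmC (v i)) '' Set.Iio (j : ℕ)) := by
        rw [Submodule.span_le]; rintro _ ⟨i, rfl⟩; exact hin i
      have h1 := Submodule.finrank_mono hle
      rw [finrank_span_eq_card hw', Fintype.card_fin] at h1
      have himg : ((fun i => msmC (v i)) '' Set.Iio (j : ℕ)) =
          (((Finset.range j).image (fun i => msmC (v i)) : Finset _) : Set (Fin n → ℝ)) := by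
        ext x; simp
      rw [himg] at h1
      have h2 := h1.trans ((finrank_span_finset_le_card _).trans Finset.card_image_le)
      simp at h2
  have hdet : (Matrix.of fun a (k : Fin n) => v k a : Matrix (Fin n) (Fin n) ℤ).det ≠ 0 := by
    set V : Matrix (Fin n) (Fin n) ℤ := Matrix.of fun a (k : Fin n) => v k a
    have h3 : (V.map (Int.cast : ℤ → ℝ)).det = ((V.det : ℤ) : ℝ) := 
      ((Int.castRingHom ℝ).map_det V).symm
    have h4 : IsUnit (V.map (Int.cast : ℤ → ℝ)) := by
      rw [← Matrix.linearIndependent_cols_iff_isUnit]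
      exact hind n le_rfl
    rw [Matrix.isUnit_iff_isUnit_det, h3] at h4
    intro h
    rw [h] at h4
    simp at h4
  have hfin : volume D ≠ ⊤ := hDcpt.measure_lt_top.ne
  have hprod : ∏ j, μ j = ∏ i : Fin n, gauge D (msmC (v i)) :=
    Finset.prod_congr rfl fun j _ => hμ' j
  have hppos : 0 < ∏ j, μ j := Finset.prod_pos fun j _ => by rw [hμ' j]; exact hpos j j.2
  have hlow := msm_lower hDc hDcpt.isClosed hD0 hDs hdet hpos
  have hup := msm_upper hn hDc hD0 hDs hdet hpos hmono1 hspan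
  rw [← hprod, ENNReal.ofReal_le_iff_le_toReal hfin] at hlow
  rw [Finset.prod_range, ← hprod] at hup
  rw [mul_div_assoc, ← hvol']
  constructor
  · rw [← div_eq_mul_inv, div_le_iff₀ hppos] at hlow
    linarith
  · have := ENNReal.toReal_mono (by simp) hup
    rw [ENNReal.toReal_mul, ENNReal.toReal_ofReal hppos.le] at this
    simpa using this
end

section
/- Blichfeldt's theorem: Let n ≥ 1, let Λ ⊆ ℝⁿ be a full-rank lattice, let m ≥ 1 be a natural number, and let Ω ⊆ ℝⁿ be a Lebesgue measurable set with vol(Ω) > m·det(Λ). Then there exist m+1 pairwise distinct points x₀, x₁, …, x_m in Ω such that all differences x_j − x_i lie in Λ. -/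
open MeasureTheory

theorem blichfeldt_theorem (n : ℕ) (hn : 1 ≤ n)
    (B : Matrix (Fin n) (Fin n) ℝ) (hB : B.det ≠ 0)
    (m : ℕ) (hm : 1 ≤ m) (Ω : Set (Fin n → ℝ)) (hΩ : MeasurableSet Ω)
    (hvol : ENNReal.ofReal (m * |B.det|) < volume Ω) :
    ∃ x : Fin (m + 1) → (Fin n → ℝ), Function.Injective x ∧ (∀ i, x i ∈ Ω) ∧
      ∀ i j, ∃ c : Fin n → ℤ, x j - x i = B.mulVec (fun k => (c k : ℝ)) := by
  classical
  have hli : LinearIndependent ℝ B.col := by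
    rw [Matrix.linearIndependent_cols_iff_isUnit, Matrix.isUnit_iff_isUnit_det]
    exact hB.isUnit
  let b : Module.Basis (Fin n) ℝ (Fin n → ℝ) := basisOfPiSpaceOfLinearIndependent hli
  have hb : (b : Fin n → Fin n → ℝ) = B.col := coe_basisOfPiSpaceOfLinearIndependent hli
  have hF := ZSpan.isAddFundamentalDomain b (volume : Measure (Fin n → ℝ))
  have hFv : volume (ZSpan.fundamentalDomain b) = ENNReal.ofReal |B.det| := by
    rw [ZSpan.volume_fundamentalDomain, hb, ← Matrix.det_transpose B]; rfl
  let L := Submodule.span ℤ (Set.range b)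
  have hmeas : ∀ g : L, Measurable fun x : Fin n → ℝ => Ω.indicator (1 : (Fin n → ℝ) → ENNReal) (g +ᵥ x) :=
    fun g => (measurable_one.indicator hΩ).comp (measurable_const_vadd g)
  have hint : volume Ω = ∫⁻ x in ZSpan.fundamentalDomain b,
      ∑' g : L, Ω.indicator (1 : (Fin n → ℝ) → ENNReal) (g +ᵥ x) := by
    rw [lintegral_tsum (fun g => (hmeas g).aemeasurable), ← lintegral_indicator_one hΩ]
    have : VAddInvariantMeasure L (Fin n → ℝ) volume :=
      inferInstanceAs <| VAddInvariantMeasure L.toAddSubgroup (Fin n → ℝ) volume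
    exact hF.lintegral_eq_tsum'' _
  obtain ⟨x, hx⟩ : ∃ x : Fin n → ℝ,
      (m : ENNReal) < ∑' g : L, Ω.indicator (1 : (Fin n → ℝ) → ENNReal) (g +ᵥ x) := by
    by_contra! h
    refine hvol.not_ge ?_
    rw [hint]
    refine (lintegral_mono h).trans ?_
    rw [lintegral_const, Measure.restrict_apply_univ, hFv,
      ENNReal.ofReal_mul (Nat.cast_nonneg m), ENNReal.ofReal_natCast]
  let S : Set L := {g | g +ᵥ x ∈ Ω}
  have hS : ((m + 1 : ℕ) : ℕ∞) ≤ S.encard := by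
    have : ∑' g : L, Ω.indicator (1 : (Fin n → ℝ) → ENNReal) (g +ᵥ x) = S.encard := by
      rw [← ENNReal.tsum_set_one, tsum_subtype S (fun _ => (1 : ENNReal))]
      rfl
    rw [this] at hx
    have : (m : ℕ∞) < S.encard := by exact_mod_cast hx
    simpa using Order.add_one_le_of_lt this
  obtain ⟨T, hTS, hT⟩ := Set.exists_subset_encard_eq hS
  have hTf : T.Finite := Set.finite_of_encard_eq_coe hT
  have := hTf.to_subtype
  have hc : Nat.card T = m + 1 := by
    rw [Nat.card_coe_set_eq, Set.ncard, hT]; rfl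
  let e := (Finite.equivFinOfCardEq hc).symm
  refine ⟨fun i => ((e i : L) : Fin n → ℝ) + x, ?_, fun i => hTS (e i).2, ?_⟩
  · intro i j h
    exact e.injective (Subtype.ext (Subtype.ext (add_right_cancel h)))
  · intro i j
    have hm : (((e j : L) - (e i : L) : L) : Fin n → ℝ) ∈ Submodule.span ℤ (Set.range b) :=
      ((e j : L) - (e i : L)).2
    obtain ⟨c, hc⟩ := (Submodule.mem_span_range_iff_exists_fun ℤ).1 hm
    refine ⟨c, ?_⟩
    rw [add_sub_add_right_eq_sub, ← Submodule.coe_sub, ← hc, hb]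
    ext k
    simp [Matrix.mulVec, dotProduct, Finset.sum_apply, mul_comm]
end

section
/- Minkowski–Hlawka theorem: Let n ≥ 2 and let S ⊆ ℝⁿ be a bounded Lebesgue measurable set which is a symmetric star body, i.e. 0 ∈ S, S = −S, and for every x ∈ S and every t ∈ [0,1] one has tx ∈ S. If vol(S) < 2·ζ(n), where ζ is the Riemann zeta function, then there exists a full-rank lattice Λ ⊆ ℝⁿ with det(Λ) = 1 such that Λ ∩ S ⊆ {0}. -/
open MeasureTheory

theorem mh_tile {d : ℕ} (g : (Fin d → ℝ) → ENNReal) :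
    ∑' q : Fin d → ℤ, ∫⁻ ξ in Set.pi Set.univ (fun _ => Set.Ico (0:ℝ) 1), g (fun i => (q i : ℝ) + ξ i)
      = ∫⁻ x, g x := by
  set Q : (Fin d → ℤ) → Set (Fin d → ℝ) := fun q => {x | ∀ i, ⌊x i⌋ = q i} with hQ
  have hm : ∀ q, MeasurableSet (Q q) := by
    intro q
    simp only [hQ, Set.ofPred_forall]
    exact MeasurableSet.iInter fun i =>
      (Int.measurable_floor.comp (measurable_pi_apply i)) (measurableSet_singleton (q i))
  have hU : (⋃ q, Q q) = Set.univ := by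
    ext x; simp only [Set.mem_iUnion, Set.mem_univ, iff_true]
    exact ⟨fun i => ⌊x i⌋, fun i => rfl⟩
  have hd : Pairwise (Function.onFun Disjoint Q) := by
    intro q r hqr
    rw [Function.onFun, Set.disjoint_left]
    intro x hx hy
    exact hqr (funext fun i => (hx i).symm.trans (hy i))
  rw [← setLIntegral_univ, ← hU, lintegral_iUnion hm hd]
  congr 1; ext q
  have hmp := measurePreserving_add_left (volume : Measure (Fin d → ℝ)) (fun i => (q i : ℝ))
  have he : MeasurableEmbedding (fun x : Fin d → ℝ => (fun i => (q i : ℝ)) + x) :=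
    (MeasurableEquiv.addLeft (fun i => (q i : ℝ))).measurableEmbedding
  have : (fun x : Fin d → ℝ => (fun i => (q i : ℝ)) + x) ⁻¹' Q q
      = Set.pi Set.univ (fun _ => Set.Ico (0:ℝ) 1) := by
    ext x
    simp [hQ, Set.mem_pi, Int.floor_eq_zero_iff]
  rw [← this]
  exact hmp.setLIntegral_comp_preimage_emb he g (Q q)

theorem mh_affine {d : ℕ} (f : (Fin d → ℝ) → ENNReal) (hf : Measurable f) (c : Fin d → ℝ)
    (s : ℝ) (hs : 0 < s) :
    ∫⁻ x, f (c + s • x) = (ENNReal.ofReal s ^ d)⁻¹ * ∫⁻ x, f x := by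
  have h1 : ∫⁻ x, f (c + x) = ∫⁻ x, f x := lintegral_add_left_eq_self f c
  have h2 := Measure.map_addHaar_smul (volume : Measure (Fin d → ℝ)) hs.ne'
  have h3 : ∫⁻ x, f (c + s • x) = ∫⁻ x, f (c + x) ∂(Measure.map (s • ·) volume) := by
    rw [lintegral_map]
    · fun_prop
    · fun_prop
  rw [h3, h2, lintegral_smul_measure, h1]
  congr 1
  rw [Module.finrank_fin_fun, abs_of_pos (by positivity), ENNReal.ofReal_inv_of_pos (by positivity),
    ENNReal.ofReal_pow hs.le]

noncomputable def mhCount (d k : ℕ) (p : (Fin d → ℤ) → Prop) : ℕ :=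
  Nat.card {c : Fin d → Fin k // p (fun i => ((c i : ℕ) : ℤ))}

open Classical in
theorem mh_avg {d k : ℕ} [NeZero k] (p : (Fin d → ℤ) → Prop)
    (hp : ∀ c q : Fin d → ℤ, p (fun i => q i * k + c i) ↔ p c)
    (f : (Fin d → ℝ) → ENNReal) (hf : Measurable f) (ε : ℝ) (hε : 0 < ε) :
    ∫⁻ ξ in Set.pi Set.univ (fun _ => Set.Ico (0:ℝ) 1),
      ∑' m : Fin d → ℤ, (if p m then f (fun i => ε * (m i + k * ξ i)) else 0)
     = mhCount d k p * ((ENNReal.ofReal (ε * k) ^ d)⁻¹ * ∫⁻ x, f x) := by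
  have hk : (0:ℝ) < k := by exact_mod_cast Nat.pos_of_ne_zero (NeZero.ne k)
  rw [lintegral_tsum]
  swap
  · intro m
    by_cases h : p m
    · simp only [h, if_true]
      apply Measurable.aemeasurable
      fun_prop
    · simp [h]
  let e : (Fin d → ℤ) ≃ (Fin d → ℤ) × (Fin d → Fin k) :=
    (Equiv.arrowCongr (Equiv.refl _) (Int.divModEquiv k)).trans (Equiv.arrowProdEquivProdArrow _ _ _)
  rw [← e.symm.tsum_eq, ENNReal.tsum_prod', ENNReal.tsum_comm]
  have key : ∀ c : Fin d → Fin k, ∀ q : Fin d → ℤ, e.symm (q, c) = fun i => q i * k + ((c i : ℕ) : ℤ) := by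
    intro c q; ext i
    simp [e, Equiv.arrowCongr, Equiv.arrowProdEquivProdArrow, Int.divModEquiv]
  simp only [key, hp _ _]
  have h2 : ∀ c : Fin d → Fin k, (∑' q : Fin d → ℤ, ∫⁻ ξ in Set.pi Set.univ (fun _ => Set.Ico (0:ℝ) 1),
      (if p (fun i => ((c i : ℕ) : ℤ)) then
        f (fun i => ε * (((q i * k + ((c i : ℕ) : ℤ) : ℤ) : ℝ) + k * ξ i)) else 0))
      = if p (fun i => ((c i : ℕ) : ℤ)) then ((ENNReal.ofReal (ε * k) ^ d)⁻¹ * ∫⁻ x, f x) else 0 := by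
    intro c
    split_ifs with h
    · rw [← mh_affine f hf (fun i => ε * ((c i : ℕ) : ℝ)) (ε * k) (by positivity),
        ← mh_tile]
      congr 1; ext q; congr 1; ext ξ; congr 1; ext i
      simp; ring
    · simp
  simp_rw [h2]
  rw [tsum_fintype, ← Finset.sum_filter, Finset.sum_const, nsmul_eq_mul]
  congr 2
  rw [mhCount, Nat.card_eq_fintype_card, Fintype.card_subtype]

def mhPrim {d : ℕ} (k : ℕ) (m : Fin d → ℤ) : Prop :=
  ∀ j : ℕ, j ∣ k → (∀ i, (j : ℤ) ∣ m i) → j = 1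

theorem mhPrim_periodic {d : ℕ} (k : ℕ) (c q : Fin d → ℤ) :
    mhPrim k (fun i => q i * k + c i) ↔ mhPrim k c := by
  unfold mhPrim
  refine forall_congr' fun j => forall_congr' fun hj => ?_
  have : ∀ i, (j : ℤ) ∣ q i * k + c i ↔ (j : ℤ) ∣ c i := fun i =>
    dvd_add_right (Dvd.dvd.mul_left (Int.natCast_dvd_natCast.2 hj) _)
  simp only [this]

theorem mhPrim_dvd {d k : ℕ} {m : Fin d → ℤ} (h : mhPrim k m) (j l : ℕ) (hj : 0 < j)
    (h1 : l ∣ j * k) (h2 : ∀ i, (l : ℤ) ∣ j * m i) : l ∣ j := by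
  obtain ⟨a, b, hab, ha, hb⟩ := Nat.exists_coprime j l
  set g := Nat.gcd j l with hg
  have hg0 : 0 < g := Nat.gcd_pos_of_pos_left _ hj
  have hb1 : b = 1 := by
    apply h b
    · rw [ha, hb, mul_comm a g, mul_comm b g, mul_assoc] at h1
      exact hab.symm.dvd_of_dvd_mul_left (Nat.dvd_of_mul_dvd_mul_left hg0 h1)
    · intro i
      have := h2 i
      rw [ha, hb] at this
      push_cast at this
      rw [mul_comm (a : ℤ), mul_comm (b : ℤ), mul_assoc] at this
      have h3 := Int.dvd_of_mul_dvd_mul_left (by exact_mod_cast hg0.ne') this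
      exact (Int.isCoprime_iff_gcd_eq_one.2 (by simpa using hab.symm)).dvd_of_dvd_mul_left h3
  rw [hb, hb1, one_mul]
  exact Nat.gcd_dvd_left _ _

theorem mh_card {d : ℕ} (N : ℕ) :
    ∑ x ∈ N.divisorsAntidiagonal, mhCount d x.2 (mhPrim x.2) ≤ N ^ d := by
  classical
  have e1 : ∑ x ∈ N.divisorsAntidiagonal, mhCount d x.2 (mhPrim x.2) =
      Fintype.card (Σ x : N.divisorsAntidiagonal,
        {c : Fin d → Fin x.1.2 // mhPrim x.1.2 (fun i => ((c i : ℕ) : ℤ))}) := by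
    rw [Fintype.card_sigma, ← Finset.sum_coe_sort]
    simp [mhCount, Nat.card_eq_fintype_card]
  have e2 : N ^ d = Fintype.card (Fin d → Fin N) := by simp
  rw [e1, e2]
  refine Fintype.card_le_of_injective (fun x i => ⟨x.1.1.1 * (x.2.1 i : ℕ), ?_⟩) ?_
  · obtain ⟨h1, h2⟩ := Nat.mem_divisorsAntidiagonal.1 x.1.2
    have := (x.2.1 i).2
    conv_rhs => rw [← h1]
    exact Nat.mul_lt_mul_of_pos_left this (Nat.pos_of_ne_zero fun h => h2 (by rw [← h1, h, zero_mul]))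
  · rintro ⟨⟨⟨j, k⟩, hx⟩, ⟨c, hc⟩⟩ ⟨⟨⟨j', k'⟩, hx'⟩, ⟨c', hc'⟩⟩ h
    simp only [funext_iff, Fin.mk.injEq] at h
    obtain ⟨h1, h2⟩ := Nat.mem_divisorsAntidiagonal.1 hx
    obtain ⟨h1', -⟩ := Nat.mem_divisorsAntidiagonal.1 hx'
    simp only at h1 h1' hc hc' h
    have hj : 0 < j := Nat.pos_of_ne_zero fun h => h2 (by rw [← h1, h, zero_mul])
    have hj' : 0 < j' := Nat.pos_of_ne_zero fun h => h2 (by rw [← h1', h, zero_mul])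
    have hjj : j = j' := by
      apply Nat.dvd_antisymm
      · refine mhPrim_dvd hc' j' j hj' ⟨k, by rw [h1', h1]⟩ fun i => ⟨(c i : ℕ), ?_⟩
        exact_mod_cast (h i).symm
      · refine mhPrim_dvd hc j j' hj ⟨k', by rw [h1', h1]⟩ fun i => ⟨(c' i : ℕ), ?_⟩
        exact_mod_cast (h i)
    subst hjj
    have hkk : k = k' := Nat.eq_of_mul_eq_mul_left hj (h1.trans h1'.symm)
    subst hkk
    have : c = c' := by
      ext i
      exact Nat.eq_of_mul_eq_mul_left hj (h i)
    subst this
    rfl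

theorem mh_logsum (a b t : ℝ) (ha : 0 < a) (hab : a ≤ b) (_ : 0 < t) :
    ∑' k : ℕ+, (if (k : ℝ) * a ≤ t ∧ t ≤ k * b then (k : ENNReal)⁻¹ else 0)
      ≤ ENNReal.ofReal (1 + Real.log (b / a)) := by
  have hb : 0 < b := ha.trans_le hab
  have key : ∀ M N : ℕ, 1 ≤ M → M ≤ N →
      ∑ k ∈ Finset.Icc M N, (k : ℝ)⁻¹ ≤ 1 + Real.log (N / M) := by
    intro M N hM hMN
    have hM0 : (0:ℝ) < M := by exact_mod_cast hM
    induction N, hMN using Nat.le_induction with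
    | base =>
      simp [hM0.ne']
      exact inv_le_one_of_one_le₀ (by exact_mod_cast hM)
    | succ N hN ih =>
      rw [Finset.sum_Icc_succ_top (by omega)]
      have hN0 : (0:ℝ) < N := hM0.trans_le (by exact_mod_cast hN)
      have h1 : ((N + 1 : ℕ) : ℝ)⁻¹ ≤ Real.log ((N + 1 : ℕ) / M) - Real.log (N / M) := by
        push_cast
        rw [Real.log_div (by positivity) (by positivity), Real.log_div (by positivity) (by positivity)]
        have := Real.one_sub_inv_le_log_of_pos (x := ((N:ℝ) + 1) / N) (by positivity)
        rw [Real.log_div (by positivity) (by positivity)] at this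
        have h2 : 1 - (((N:ℝ) + 1) / N)⁻¹ = ((N:ℝ) + 1)⁻¹ := by field_simp; ring
        linarith
      linarith
  rw [ENNReal.tsum_eq_iSup_sum]
  refine iSup_le fun s => ?_
  rw [← Finset.sum_filter]
  set s' := (s.filter fun k : ℕ+ => (k : ℝ) * a ≤ t ∧ t ≤ k * b).image (fun k : ℕ+ => (k : ℕ)) with hs'
  have e : ∑ k ∈ s.filter (fun k : ℕ+ => (k : ℝ) * a ≤ t ∧ t ≤ k * b), (k : ENNReal)⁻¹
      = ENNReal.ofReal (∑ k ∈ s', (k : ℝ)⁻¹) := by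
    rw [hs', Finset.sum_image (fun x _ y _ h => PNat.coe_injective h), ENNReal.ofReal_sum_of_nonneg]
    · refine Finset.sum_congr rfl fun k _ => ?_
      rw [ENNReal.ofReal_inv_of_pos (by exact_mod_cast k.pos), ENNReal.ofReal_natCast]
    · intros; positivity
  rw [e]
  apply ENNReal.ofReal_le_ofReal
  rcases s'.eq_empty_or_nonempty with h | h
  · rw [h]; simp
    have := Real.log_nonneg ((one_le_div ha).2 hab)
    linarith
  · have hmem : ∀ k ∈ s', 1 ≤ k ∧ (k : ℝ) * a ≤ t ∧ t ≤ k * b := by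
      intro k hk
      simp only [hs', Finset.mem_image, Finset.mem_filter] at hk
      obtain ⟨x, ⟨-, hx⟩, rfl⟩ := hk
      exact ⟨x.pos, hx⟩
    obtain ⟨hM1, -, hM2⟩ := hmem _ (s'.min'_mem h)
    obtain ⟨hN1, hN2, -⟩ := hmem _ (s'.max'_mem h)
    have hMN := s'.min'_le_max' h
    set M := s'.min' h
    set N := s'.max' h
    have hM0 : (0:ℝ) < M := by exact_mod_cast hM1
    have hN0 : (0:ℝ) < N := by exact_mod_cast hN1
    calc ∑ k ∈ s', (k : ℝ)⁻¹ ≤ ∑ k ∈ Finset.Icc M N, (k : ℝ)⁻¹ := by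
          apply Finset.sum_le_sum_of_subset_of_nonneg
          · intro k hk
            exact Finset.mem_Icc.2 ⟨s'.min'_le k hk, s'.le_max' k hk⟩
          · intros; positivity
      _ ≤ 1 + Real.log (N / M) := key M N hM1 hMN
      _ ≤ _ := by
          gcongr 1 + Real.log ?_
          rw [div_le_div_iff₀ hM0 ha]
          linarith

theorem mh_riemann (V : ℝ → ENNReal) (hV : Measurable V) (Z : ENNReal) (b : ℝ) (hb : 0 < b)
    (h : ∀ x : ℝ, 0 < x → x ≤ b → Z ≤ ∑' k : ℕ+, ENNReal.ofReal x * V (k * x)) :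
    Z ≤ ∫⁻ t in Set.Ioi 0, V t := by
  set v := ∫⁻ t in Set.Ioi 0, V t with hv
  have main : ∀ a : ℝ, 0 < a → a ≤ b →
      Z * ENNReal.ofReal (Real.log (b / a)) ≤ ENNReal.ofReal (1 + Real.log (b / a)) * v := by
    intro a ha hab
    have hlog : ∫⁻ x in Set.Ioc a b, ENNReal.ofReal x⁻¹ = ENNReal.ofReal (Real.log (b / a)) := by
      rw [← ofReal_integral_eq_lintegral_ofReal, ← intervalIntegral.integral_of_le hab,
        integral_inv_of_pos ha hb]
      · have : IntervalIntegrable (fun x : ℝ => x⁻¹) volume a b := by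
          apply intervalIntegral.intervalIntegrable_inv
          · intro x hx
            rw [Set.uIcc_of_le hab] at hx
            exact (ha.trans_le hx.1).ne'
          · exact continuousOn_id
        exact (intervalIntegrable_iff_integrableOn_Ioc_of_le hab).1 this
      · filter_upwards [ae_restrict_mem measurableSet_Ioc] with x hx
        exact inv_nonneg.2 (ha.trans hx.1).le
    calc Z * ENNReal.ofReal (Real.log (b / a))
        = ∫⁻ x in Set.Ioc a b, Z * ENNReal.ofReal x⁻¹ := by
          rw [lintegral_const_mul _ (by fun_prop), hlog]
      _ ≤ ∫⁻ x in Set.Ioc a b, ∑' k : ℕ+, V (k * x) := by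
          apply setLIntegral_mono' measurableSet_Ioc
          intro x hx
          have hx0 := ha.trans hx.1
          calc Z * ENNReal.ofReal x⁻¹ ≤ (∑' k : ℕ+, ENNReal.ofReal x * V (k * x)) * ENNReal.ofReal x⁻¹ := by
                gcongr; exact h x hx0 hx.2
            _ = _ := by
                rw [ENNReal.tsum_mul_left, mul_comm, ← mul_assoc, ← ENNReal.ofReal_mul (by positivity),
                  inv_mul_cancel₀ hx0.ne']
                simp
      _ = ∑' k : ℕ+, ∫⁻ x in Set.Ioc a b, V (k * x) :=
          lintegral_tsum fun k => by fun_prop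
      _ ≤ ∑' k : ℕ+, ∫⁻ t in Set.Ioi 0, (if (k : ℝ) * a ≤ t ∧ t ≤ k * b then (k : ENNReal)⁻¹ else 0) * V t := by
          refine ENNReal.tsum_le_tsum fun k => ?_
          have hk : (0:ℝ) < k := by exact_mod_cast k.pos
          have h3 : Measure.map ((k:ℝ) * ·) volume = (k:ENNReal)⁻¹ • (volume : Measure ℝ) := by
            have h4 := Real.map_volume_mul_left hk.ne'
            rw [h4, abs_of_pos (inv_pos.2 hk), ENNReal.ofReal_inv_of_pos hk, ENNReal.ofReal_natCast]
          have hW : Measurable (fun t => (Set.Icc (k*a) (k*b)).indicator V t) := hV.indicator measurableSet_Icc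
          calc ∫⁻ x in Set.Ioc a b, V (k * x) ≤ ∫⁻ x, (Set.Icc (k*a) (k*b)).indicator V (k * x) := by
                rw [← lintegral_indicator measurableSet_Ioc]
                refine lintegral_mono fun x => ?_
                by_cases hx : x ∈ Set.Ioc a b
                · rw [Set.indicator_of_mem hx, Set.indicator_of_mem]
                  exact ⟨mul_le_mul_of_nonneg_left hx.1.le hk.le, mul_le_mul_of_nonneg_left hx.2 hk.le⟩
                · rw [Set.indicator_of_notMem hx]; exact zero_le
            _ = (k:ENNReal)⁻¹ * ∫⁻ t, (Set.Icc (k*a) (k*b)).indicator V t := by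
                have h5 := lintegral_map (μ := volume) hW (measurable_const_mul (k:ℝ))
                rw [h3, lintegral_smul_measure, smul_eq_mul] at h5
                exact h5.symm
            _ = ∫⁻ t, (k:ENNReal)⁻¹ * (Set.Icc (k*a) (k*b)).indicator V t := by
                rw [lintegral_const_mul _ hW]
            _ ≤ _ := by
                rw [← lintegral_indicator measurableSet_Ioi]
                refine lintegral_mono fun t => ?_
                by_cases ht : t ∈ Set.Icc (k*a) (k*b)
                · have : t ∈ Set.Ioi (0:ℝ) := lt_of_lt_of_le (by positivity) ht.1
                  rw [Set.indicator_of_mem ht, Set.indicator_of_mem this, if_pos ⟨ht.1, ht.2⟩]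
                · rw [Set.indicator_of_notMem ht]; simp
      _ = ∫⁻ t in Set.Ioi 0, ∑' k : ℕ+, (if (k : ℝ) * a ≤ t ∧ t ≤ k * b then (k : ENNReal)⁻¹ else 0) * V t := by
          rw [lintegral_tsum]
          intro k
          apply Measurable.aemeasurable
          apply Measurable.mul _ hV
          exact Measurable.ite measurableSet_Icc measurable_const measurable_const
      _ ≤ ∫⁻ t in Set.Ioi 0, ENNReal.ofReal (1 + Real.log (b / a)) * V t := by
          apply setLIntegral_mono' measurableSet_Ioi
          intro t ht
          rw [ENNReal.tsum_mul_right]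
          gcongr
          exact mh_logsum a b t ha hab ht
      _ = _ := by rw [lintegral_const_mul _ hV]
  by_cases hvt : v = ⊤
  · rw [hvt]; exact le_top
  have lim : ∀ L : ℕ, Z ≤ v + (((L + 1 : ℕ) : ENNReal))⁻¹ * v := by
    intro L
    have hL : (0:ℝ) < (L + 1 : ℕ) := by positivity
    have := main (b * Real.exp (-(L + 1 : ℕ))) (by positivity)
      (mul_le_of_le_one_right hb.le (Real.exp_le_one_iff.2 (by linarith)))
    have e : b / (b * Real.exp (-(L + 1 : ℕ))) = Real.exp (L + 1 : ℕ) := by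
      rw [Real.exp_neg]; field_simp
    rw [e, Real.log_exp, ENNReal.ofReal_add zero_le_one hL.le, ENNReal.ofReal_natCast, ENNReal.ofReal_one] at this
    have hc0 : ((L + 1 : ℕ) : ENNReal) ≠ 0 := by simp
    have hct : ((L + 1 : ℕ) : ENNReal) ≠ ⊤ := ENNReal.natCast_ne_top _
    calc Z = Z * (L + 1 : ℕ) * ((L + 1 : ℕ) : ENNReal)⁻¹ := by
          rw [mul_assoc, ENNReal.mul_inv_cancel hc0 hct, mul_one]
      _ ≤ (1 + (L + 1 : ℕ)) * v * ((L + 1 : ℕ) : ENNReal)⁻¹ := by gcongr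
      _ = (L + 1 : ℕ) * ((L + 1 : ℕ) : ENNReal)⁻¹ * v + (((L + 1 : ℕ) : ENNReal))⁻¹ * v := by ring
      _ = _ := by rw [ENNReal.mul_inv_cancel hc0 hct, one_mul]
  have ht : Filter.Tendsto (fun L : ℕ => v + (((L + 1 : ℕ) : ENNReal))⁻¹ * v) Filter.atTop (nhds (v + 0 * v)) := by
    refine tendsto_const_nhds.add (ENNReal.Tendsto.mul_const ?_ (Or.inr hvt))
    exact ENNReal.tendsto_inv_nat_nhds_zero.comp (Filter.tendsto_add_atTop_nat 1)
  simpa using ge_of_tendsto' ht lim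

noncomputable def mhV {d : ℕ} (S : Set (Fin (d+1) → ℝ)) (t : ℝ) : ENNReal :=
  ∫⁻ x : Fin d → ℝ, S.indicator 1 (Fin.cons t x : Fin (d+1) → ℝ)

theorem mh_cons_meas {d : ℕ} :
    Measurable (fun p : ℝ × (Fin d → ℝ) => (Fin.cons p.1 p.2 : Fin (d+1) → ℝ)) := by
  refine measurable_pi_iff.2 fun i => ?_
  refine Fin.cases ?_ (fun i => ?_) i
  · simpa using measurable_fst
  · exact (measurable_pi_apply i).comp measurable_snd

theorem mhV_meas {d : ℕ} (S : Set (Fin (d+1) → ℝ)) (hS : MeasurableSet S) :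
    Measurable (mhV S) := by
  have h1 : Measurable (S.indicator (1 : (Fin (d+1) → ℝ) → ENNReal)) := measurable_one.indicator hS
  exact Measurable.lintegral_prod_right' (h1.comp mh_cons_meas)

theorem mhV_int {d : ℕ} (S : Set (Fin (d+1) → ℝ)) (hS : MeasurableSet S) :
    ∫⁻ t, mhV S t = volume S := by
  have h1 : Measurable (S.indicator (1 : (Fin (d+1) → ℝ) → ENNReal)) := measurable_one.indicator hS
  have h2 := (volume_preserving_piFinSuccAbove (fun _ : Fin (d + 1) => ℝ) 0).symm
  have h3 := h2.lintegral_comp h1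
  rw [lintegral_indicator_one hS] at h3
  rw [← h3]
  have h4 := lintegral_prod (μ := (volume : Measure ℝ)) (ν := (volume : Measure (Fin d → ℝ)))
    (fun p => S.indicator (1 : (Fin (d+1) → ℝ) → ENNReal) (Fin.cons p.1 p.2))
    (h1.comp mh_cons_meas).aemeasurable
  unfold mhV
  rw [← h4]
  refine lintegral_congr fun p => ?_
  congr 1
  ext i
  refine Fin.cases ?_ (fun i => ?_) i
  · rfl
  · rfl

theorem mhV_half {d : ℕ} (S : Set (Fin (d+1) → ℝ)) (hS : MeasurableSet S) (hsymm : S = -S) :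
    2 * ∫⁻ t in Set.Ioi 0, mhV S t ≤ volume S := by
  have hneg : ∀ x, S.indicator (1 : (Fin (d+1) → ℝ) → ENNReal) (-x) = S.indicator 1 x := by
    intro x
    have : -x ∈ S ↔ x ∈ S := by
      conv_lhs => rw [hsymm]
      simp
    by_cases h : x ∈ S
    · simp [h, this.2 h]
    · have h' : -x ∉ S := fun q => h (this.1 q)
      simp [h, h']
  have heven : ∀ t, mhV S (-t) = mhV S t := by
    intro t
    unfold mhV
    rw [← lintegral_neg_eq_self]
    refine lintegral_congr fun x => ?_
    rw [← hneg]
    congr 1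
    ext i
    refine Fin.cases ?_ (fun i => ?_) i <;> simp
  have h1 : ∫⁻ t in Set.Iio 0, mhV S t = ∫⁻ t in Set.Ioi 0, mhV S t := by
    rw [← lintegral_indicator measurableSet_Iio, ← lintegral_indicator measurableSet_Ioi,
      ← lintegral_neg_eq_self]
    refine lintegral_congr fun x => ?_
    simp [Set.indicator, heven]
  rw [two_mul]
  nth_rewrite 1 [← h1]
  rw [← lintegral_union measurableSet_Ioi, ← mhV_int S hS]
  · exact setLIntegral_le_lintegral _ _
  · rw [Set.disjoint_left]; intro x hx hy
    exact lt_asymm (Set.mem_Iio.1 hx) (Set.mem_Ioi.1 hy)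

noncomputable def mhW (d k : ℕ) : ENNReal := mhCount d k (mhPrim k) * ((k : ENNReal) ^ d)⁻¹

open Classical in
theorem mh_exists {d : ℕ} (S : Set (Fin (d+1) → ℝ)) (hS : MeasurableSet S) (h ε : ℝ) (hh : 0 < h)
    (hε : 0 < ε) (heq : h * ε ^ d = 1)
    (hP : ∑' k : ℕ+, mhW d k * (ENNReal.ofReal h * mhV S (k * h)) < 1) :
    ∃ ξ : Fin d → ℝ, ∀ k : ℕ, 0 < k → ∀ m : Fin d → ℤ, mhPrim k m →
      (Fin.cons (k * h) (fun i => ε * (m i + k * ξ i)) : Fin (d+1) → ℝ) ∉ S := by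
  have h1 : Measurable (S.indicator (1 : (Fin (d+1) → ℝ) → ENNReal)) := measurable_one.indicator hS
  have hslice : ∀ t : ℝ, Measurable fun x : Fin d → ℝ =>
      S.indicator (1 : (Fin (d+1) → ℝ) → ENNReal) (Fin.cons t x) := fun t =>
    (h1.comp mh_cons_meas).comp measurable_prodMk_left
  set G : (Fin d → ℝ) → ENNReal := fun ξ => ∑' k : ℕ+, ∑' m : Fin d → ℤ,
    (if mhPrim k m then S.indicator (1 : (Fin (d+1) → ℝ) → ENNReal)
      (Fin.cons ((k:ℕ) * h) (fun i => ε * (m i + (k:ℕ) * ξ i))) else 0) with hG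
  have hint : ∫⁻ ξ in Set.pi Set.univ (fun _ => Set.Ico (0:ℝ) 1), G ξ
      = ∑' k : ℕ+, mhW d k * (ENNReal.ofReal h * mhV S (k * h)) := by
    rw [hG, lintegral_tsum]
    · congr 1; ext k
      have hk : (0:ℝ) < (k:ℕ) := by exact_mod_cast k.pos
      haveI : NeZero (k:ℕ) := ⟨k.ne_zero⟩
      rw [mh_avg (mhPrim (k:ℕ)) (mhPrim_periodic (k:ℕ)) _ (hslice ((k:ℕ) * h)) ε hε]
      rw [mhW, mhV]
      have : (ENNReal.ofReal (ε * (k:ℕ)) ^ d)⁻¹ = (((k:ℕ) : ENNReal) ^ d)⁻¹ * ENNReal.ofReal h := by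
        have e1 : h = (ε ^ d)⁻¹ := eq_inv_of_mul_eq_one_left heq
        rw [e1, ENNReal.ofReal_inv_of_pos (by positivity), ENNReal.ofReal_mul hε.le, mul_pow,
          ENNReal.ofReal_pow hε.le, ENNReal.ofReal_natCast, ENNReal.mul_inv, mul_comm]
        · left; exact pow_ne_zero _ (by simpa using hε)
        · left; exact ENNReal.pow_ne_top ENNReal.ofReal_ne_top
      rw [this]
      ring
    · intro k
      apply Measurable.aemeasurable
      refine Measurable.tsum fun m => ?_
      by_cases hm : mhPrim (k:ℕ) m
      · simp only [hm, if_true]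
        exact (hslice _).comp (by fun_prop)
      · simp [hm]
  have : ∃ ξ, G ξ < 1 := by
    by_contra hcon
    push Not at hcon
    have h2 : ∫⁻ ξ in Set.pi Set.univ (fun _ : Fin d => Set.Ico (0:ℝ) 1), (1 : ENNReal)
        ≤ ∫⁻ ξ in Set.pi Set.univ (fun _ => Set.Ico (0:ℝ) 1), G ξ := lintegral_mono fun ξ => hcon ξ
    rw [hint, setLIntegral_one, Real.volume_pi_Ico] at h2
    simp at h2
    exact absurd hP (not_lt.2 h2)
  obtain ⟨ξ, hξ⟩ := this
  refine ⟨ξ, fun k hk m hm hmem => ?_⟩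
  refine absurd hξ (not_lt.2 ?_)
  calc (1 : ENNReal) = (if mhPrim ((⟨k, hk⟩ : ℕ+) : ℕ) m then S.indicator (1 : (Fin (d+1) → ℝ) → ENNReal)
      (Fin.cons (((⟨k, hk⟩ : ℕ+) : ℕ) * h) (fun i => ε * (m i + ((⟨k, hk⟩ : ℕ+) : ℕ) * ξ i))) else 0) := by
        simp [hm, hmem]
    _ ≤ _ := ENNReal.le_tsum m
    _ ≤ G ξ := ENNReal.le_tsum (f := fun k : ℕ+ => ∑' m : Fin d → ℤ,
    (if mhPrim k m then S.indicator (1 : (Fin (d+1) → ℝ) → ENNReal)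
      (Fin.cons ((k:ℕ) * h) (fun i => ε * (m i + (k:ℕ) * ξ i))) else 0)) (⟨k, hk⟩ : ℕ+)

theorem mh_term (d j k : ℕ) (hj : 0 < j) (V : ℝ → ENNReal) (x : ℝ) :
    ((j : ENNReal) ^ (d+1))⁻¹ * (mhW d k * (ENNReal.ofReal (j * x) * V (k * (j * x))))
      = mhCount d k (mhPrim k) * ((((j * k : ℕ) : ENNReal) ^ d)⁻¹ *
        (ENNReal.ofReal x * V ((j * k : ℕ) * x))) := by
  have hj0 : (j : ENNReal) ≠ 0 := by exact_mod_cast hj.ne'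
  have hjt : (j : ENNReal) ≠ ⊤ := ENNReal.natCast_ne_top _
  have e : (k : ℝ) * (j * x) = (j * k : ℕ) * x := by push_cast; ring
  rw [e, mhW, ENNReal.ofReal_mul (by positivity), ENNReal.ofReal_natCast, pow_succ,
    ENNReal.mul_inv (Or.inr hjt) (Or.inr hj0)]
  push_cast
  rw [mul_pow, ENNReal.mul_inv (Or.inl (pow_ne_zero _ hj0)) (Or.inl (ENNReal.pow_ne_top hjt))]
  calc _ = ((j : ENNReal)⁻¹ * j) * (mhCount d k (mhPrim k) * (((j : ENNReal) ^ d)⁻¹ * ((k : ENNReal) ^ d)⁻¹ *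
        (ENNReal.ofReal x * V (j * k * x)))) := by ring
    _ = _ := by rw [ENNReal.inv_mul_cancel hj0 hjt, one_mul]

theorem mh_conv (d : ℕ) (V : ℝ → ENNReal) (x : ℝ) :
    ∑' j : ℕ+, ((j : ENNReal) ^ (d+1))⁻¹ *
      ∑' k : ℕ+, mhW d k * (ENNReal.ofReal (j * x) * V (k * (j * x)))
    ≤ ∑' N : ℕ+, ENNReal.ofReal x * V (N * x) := by
  simp_rw [← ENNReal.tsum_mul_left]
  rw [← ENNReal.tsum_prod, ← sigmaAntidiagonalEquivProd.tsum_eq, ENNReal.tsum_sigma']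
  refine ENNReal.tsum_le_tsum fun N => ?_
  rw [tsum_fintype]
  have hN0 : ((N:ℕ) : ENNReal) ≠ 0 := by simp
  have hNt : ((N:ℕ) : ENNReal) ≠ ⊤ := ENNReal.natCast_ne_top _
  calc _ = ∑ y : Nat.divisorsAntidiagonal N, (mhCount d y.1.2 (mhPrim y.1.2) : ENNReal) *
        ((((N:ℕ) : ENNReal) ^ d)⁻¹ * (ENNReal.ofReal x * V ((N:ℕ) * x))) := by
        refine Finset.sum_congr rfl fun y _ => ?_
        obtain ⟨⟨j, k⟩, hy⟩ := y
        obtain ⟨h1, h2⟩ := Nat.mem_divisorsAntidiagonal.1 hy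
        have hj : 0 < j := Nat.pos_of_ne_zero fun h => h2 (by rw [← h1]; simp [h])
        have := mh_term d j k hj V x
        simp only at h1
        rw [h1] at this
        exact this
    _ = ((∑ y ∈ Nat.divisorsAntidiagonal N, mhCount d y.2 (mhPrim y.2) : ℕ) : ENNReal) *
        ((((N:ℕ) : ENNReal) ^ d)⁻¹ * (ENNReal.ofReal x * V ((N:ℕ) * x))) := by
        rw [← Finset.sum_mul]
        push_cast
        congr 1
        exact Finset.sum_coe_sort (Nat.divisorsAntidiagonal (N:ℕ))
          (fun y => (mhCount d y.2 (mhPrim y.2) : ENNReal))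
    _ ≤ ((N:ℕ) : ENNReal) ^ d * ((((N:ℕ) : ENNReal) ^ d)⁻¹ * (ENNReal.ofReal x * V ((N:ℕ) * x))) := by
        gcongr
        exact_mod_cast mh_card (d := d) (N:ℕ)
    _ = _ := by
        rw [← mul_assoc, ENNReal.mul_inv_cancel (pow_ne_zero _ hN0) (ENNReal.pow_ne_top hNt), one_mul]

theorem mh_choose_h {d : ℕ} (V : ℝ → ENNReal) (hV : Measurable V) (b : ℝ) (hb : 0 < b)
    (hlt : ∫⁻ t in Set.Ioi 0, V t < ∑' j : ℕ+, ((j : ENNReal) ^ (d+1))⁻¹) :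
    ∃ h : ℝ, 0 < h ∧ h ≤ b ∧ ∑' k : ℕ+, mhW d k * (ENNReal.ofReal h * V (k * h)) < 1 := by
  by_contra hcon
  push Not at hcon
  refine absurd hlt (not_lt.2 ?_)
  rw [ENNReal.tsum_eq_iSup_sum]
  refine iSup_le fun s => ?_
  obtain ⟨M, hM⟩ := s.bddAbove
  have hM0 : (0:ℝ) < M := by exact_mod_cast M.pos
  refine mh_riemann V hV _ (b / M) (by positivity) fun x hx hxb => ?_
  refine le_trans ?_ (mh_conv d V x)
  refine le_trans ?_ (ENNReal.sum_le_tsum s)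
  refine Finset.sum_le_sum fun j hj => ?_
  have hj0 : (0:ℝ) < j := by exact_mod_cast j.pos
  have hjM : (j:ℝ) ≤ M := by exact_mod_cast hM hj
  have := hcon (j * x) (by positivity) (by
    calc (j:ℝ) * x ≤ M * (b / M) := by gcongr
      _ = b := by field_simp)
  calc ((j : ENNReal) ^ (d+1))⁻¹ = ((j : ENNReal) ^ (d+1))⁻¹ * 1 := (mul_one _).symm
    _ ≤ _ := by gcongr

theorem mh_prim_exists {d k : ℕ} (hk : 0 < k) (m : Fin d → ℤ) :
    ∃ g k' : ℕ, ∃ m' : Fin d → ℤ, 0 < g ∧ 0 < k' ∧ k = g * k' ∧ (∀ i, m i = g * m' i) ∧ mhPrim k' m' := by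
  induction k using Nat.strong_induction_on generalizing m with
  | _ k ih =>
    by_cases hp : mhPrim k m
    · exact ⟨1, k, m, one_pos, hk, by simp, by simp, hp⟩
    · unfold mhPrim at hp
      push Not at hp
      obtain ⟨j, ⟨k1, rfl⟩, hm, hj1⟩ := hp
      choose m1 hm1 using hm
      have hj : 0 < j := Nat.pos_of_mul_pos_right hk
      have hk1 : 0 < k1 := Nat.pos_of_mul_pos_left hk
      obtain ⟨g, k', m', hg, hk', e1, e2, hp⟩ := ih k1 (by nlinarith [show 2 ≤ j by omega]) hk1 m1
      refine ⟨j * g, k', m', by positivity, hk', by rw [e1, mul_assoc], fun i => ?_, hp⟩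
      rw [hm1, e2]; push_cast; ring

theorem mh_matrix {d : ℕ} (h ε : ℝ) (ξ : Fin d → ℝ) (heq : h * ε ^ d = 1) :
    ∃ B : Matrix (Fin (d+1)) (Fin (d+1)) ℝ, |B.det| = 1 ∧ ∀ m : Fin (d+1) → ℤ,
      B.mulVec (fun i => (m i : ℝ)) =
        Fin.cons (m 0 * h) (fun i => ε * (m i.succ + m 0 * ξ i)) := by
  refine ⟨Matrix.of (Fin.cons (Fin.cons h (fun _ => 0))
    (fun i => Fin.cons (ε * ξ i) (fun j => if i = j then ε else 0))), ?_, ?_⟩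
  · rw [Matrix.det_of_lowerTriangular]
    · simp [Fin.prod_univ_succ, heq]
    · intro i j hij
      have hij : i < j := hij
      revert hij
      refine Fin.cases ?_ (fun i => ?_) i <;> refine Fin.cases ?_ (fun j => ?_) j
      · simp
      · simp
      · simp
      · intro hij
        have : i ≠ j := fun h => by subst h; exact lt_irrefl _ hij
        simp [this]
  · intro m
    ext i
    refine Fin.cases ?_ (fun i => ?_) i
    · simp [Matrix.mulVec, dotProduct, Fin.sum_univ_succ, mul_comm]
    · simp [Matrix.mulVec, dotProduct, Fin.sum_univ_succ]
      ring

theorem minkowski_hlawka (n : ℕ) (hn : 2 ≤ n)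
    (S : Set (Fin n → ℝ)) (hS : MeasurableSet S) (hbd : Bornology.IsBounded S)
    (h0 : (0 : Fin n → ℝ) ∈ S) (hsymm : S = -S)
    (hstar : ∀ x ∈ S, ∀ t ∈ Set.Icc (0 : ℝ) 1, t • x ∈ S)
    (hvol : volume S < ENNReal.ofReal (2 * ∑' k : ℕ, ((k : ℝ) + 1)⁻¹ ^ n)) :
    ∃ B : Matrix (Fin n) (Fin n) ℝ, |B.det| = 1 ∧
      ∀ m : Fin n → ℤ, B.mulVec (fun i => (m i : ℝ)) ∈ S → m = 0 := by
  obtain ⟨d, rfl⟩ : ∃ d, n = d + 1 := ⟨n - 1, by omega⟩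
  have hd : d ≠ 0 := by omega
  obtain ⟨R, hR0, hR⟩ := hbd.exists_pos_norm_lt
  have hlt : ∫⁻ t in Set.Ioi 0, mhV S t < ∑' j : ℕ+, ((j : ENNReal) ^ (d+1))⁻¹ := by
    have h2 : ENNReal.ofReal (2 * ∑' k : ℕ, ((k : ℝ) + 1)⁻¹ ^ (d+1))
        = 2 * ∑' j : ℕ+, ((j : ENNReal) ^ (d+1))⁻¹ := by
      have hs : Summable fun k : ℕ => ((k : ℝ) + 1)⁻¹ ^ (d+1) := by
        have := (summable_nat_add_iff 1).2 (Real.summable_nat_pow_inv.2 (show 1 < d + 1 by omega))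
        simpa using this
      rw [ENNReal.ofReal_mul zero_le_two, ENNReal.ofReal_tsum_of_nonneg (fun k => by positivity) hs,
        tsum_pnat_eq_tsum_succ (f := fun j : ℕ => ((j : ENNReal) ^ (d+1))⁻¹)]
      congr 1
      · simp
      · congr 1; ext k
        rw [ENNReal.ofReal_pow (by positivity), ENNReal.ofReal_inv_of_pos (by positivity),
          ENNReal.inv_pow]
        congr 2
        have : ((k:ℝ) + 1) = ((k + 1 : ℕ) : ℝ) := by push_cast; rfl
        rw [this, ENNReal.ofReal_natCast]
    rw [h2] at hvol
    have h3 := (mhV_half S hS hsymm).trans_lt hvol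
    by_contra hc
    exact absurd h3 (not_lt.2 (by gcongr; exact not_lt.1 hc))
  obtain ⟨h, hh, hhb, hP⟩ := mh_choose_h (d := d) (mhV S) (mhV_meas S hS) ((R ^ d)⁻¹) (by positivity) hlt
  set ε : ℝ := (h⁻¹) ^ ((d:ℝ)⁻¹) with hε
  have hε0 : 0 < ε := by positivity
  have hεd : ε ^ d = h⁻¹ := Real.rpow_inv_natCast_pow (by positivity) hd
  have heq : h * ε ^ d = 1 := by rw [hεd, mul_inv_cancel₀ hh.ne']
  have hRε : R ≤ ε := by
    refine le_of_pow_le_pow_left₀ hd hε0.le ?_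
    rw [hεd]
    exact (le_inv_comm₀ (by positivity) hh).2 hhb
  obtain ⟨ξ, hξ⟩ := mh_exists S hS h ε hh hε0 heq hP
  obtain ⟨B, hB, hBm⟩ := mh_matrix h ε ξ heq
  refine ⟨B, hB, ?_⟩
  -- no point with positive first coordinate
  have hpos : ∀ m : Fin (d+1) → ℤ, 0 < m 0 → B.mulVec (fun i => (m i : ℝ)) ∉ S := by
    intro m hm hmem
    obtain ⟨k, hk⟩ := Int.eq_ofNat_of_zero_le hm.le
    have hk0 : 0 < k := by omega
    obtain ⟨g, k', m', hg, hk', e1, e2, hp⟩ := mh_prim_exists hk0 (fun i => m i.succ)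
    refine hξ k' hk' m' hp ?_
    have hg' : (0:ℝ) < g := by exact_mod_cast hg
    have hg1 : (1:ℝ) ≤ g := by exact_mod_cast hg
    have := hstar _ hmem ((g:ℝ)⁻¹) ⟨by positivity, inv_le_one_of_one_le₀ hg1⟩
    convert this using 1
    rw [hBm]
    ext i
    refine Fin.cases ?_ (fun i => ?_) i
    · simp [hk, e1]; field_simp
    · simp [hk, e1, e2]; field_simp
  intro m hmem
  rcases lt_trichotomy (m 0) 0 with hm | hm | hm
  · exfalso
    refine hpos (-m) (by simpa using hm) ?_
    rw [hsymm, Set.mem_neg]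
    convert hmem using 1
    rw [← Matrix.mulVec_neg]
    congr 1
    ext i; simp
  · by_contra hne
    obtain ⟨i, hi⟩ : ∃ i : Fin d, m i.succ ≠ 0 := by
      by_contra hc
      push Not at hc
      apply hne
      ext i
      refine Fin.cases ?_ (fun i => ?_) i
      · simpa using hm
      · simpa using hc i
    have h1 := hR _ hmem
    have h2 := norm_le_pi_norm (B.mulVec (fun i => (m i : ℝ))) i.succ
    rw [hBm] at h1 h2
    simp only [Fin.cons_succ, hm, Int.cast_zero, zero_mul, add_zero, norm_mul] at h1 h2
    have h3 : (1:ℝ) ≤ ‖(m i.succ : ℝ)‖ := by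
      rw [Real.norm_eq_abs]
      exact_mod_cast Int.one_le_abs hi
    rw [Real.norm_of_nonneg hε0.le] at h2
    nlinarith
  · exact absurd hmem (hpos m hm)
end

section
/- Gauss's bound for the circle problem: For every real x ≥ 1, the number R(x) = #{(a,b) ∈ ℤ² : a² + b² ≤ x} of integer lattice points in the closed disk of radius √x around the origin satisfies π·(√x − √2/2)² < R(x) < π·(√x + √2/2)². In particular R(x) = πx + O(x^{1/2}). -/
open Filter

open MeasureTheory in
lemma gcp_disc (r : ℝ) (hr : 0 ≤ r) :
    volume {z : ℝ × ℝ | z.1 ^ 2 + z.2 ^ 2 ≤ r ^ 2} = ENNReal.ofReal (Real.pi * r ^ 2) := by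
  have h := (Complex.volume_preserving_equiv_real_prod.symm
    Complex.measurableEquivRealProd).measure_preimage_equiv (Metric.closedBall 0 r)
  rw [Complex.volume_closedBall] at h
  have h2 : (Complex.measurableEquivRealProd.symm ⁻¹' (Metric.closedBall 0 r)) =
      {z : ℝ × ℝ | z.1 ^ 2 + z.2 ^ 2 ≤ r ^ 2} := by
    ext z
    have h1 : ‖Complex.measurableEquivRealProd.symm z‖ ^ 2 = z.1 ^ 2 + z.2 ^ 2 := by
      rw [Complex.sq_norm, Complex.normSq_apply]
      simp [Complex.measurableEquivRealProd, Complex.equivRealProd]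
      ring
    simp only [Set.mem_preimage, mem_closedBall_zero_iff, Set.mem_ofPred_eq]
    rw [← h1]
    exact (pow_le_pow_iff_left₀ (norm_nonneg _) hr two_ne_zero).symm
  rw [h2] at h
  rw [h, ENNReal.ofReal_mul Real.pi_pos.le, mul_comm, ENNReal.ofReal_pow hr]
  congr 1
  rw [← NNReal.coe_real_pi, ENNReal.ofReal_coe_nnreal]

lemma gcp_finite (x : ℝ) : {p : ℤ × ℤ | (p.1 : ℝ) ^ 2 + (p.2 : ℝ) ^ 2 ≤ x}.Finite := by
  apply ((Set.finite_Icc (-⌈x⌉) ⌈x⌉).prod (Set.finite_Icc (-⌈x⌉) ⌈x⌉)).subset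
  rintro ⟨a, b⟩ h
  simp only [Set.mem_ofPred_eq] at h
  have h3 : a ^ 2 + b ^ 2 ≤ ⌈x⌉ := by
    have := h.trans (Int.le_ceil x)
    exact_mod_cast this
  have key : ∀ c : ℤ, c ^ 2 ≤ ⌈x⌉ → -⌈x⌉ ≤ c ∧ c ≤ ⌈x⌉ := by
    intro c hc
    have h1 := Int.le_self_sq c
    have h2 := Int.le_self_sq (-c)
    rw [neg_sq] at h2
    constructor <;> linarith
  exact ⟨key a (by nlinarith), key b (by nlinarith)⟩

def gcpU (x : ℝ) : Set (ℝ × ℝ) :=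
  ⋃ p ∈ (gcp_finite x).toFinset,
    Set.Ico ((p.1 : ℝ) - 1 / 2) (p.1 + 1 / 2) ×ˢ Set.Ico ((p.2 : ℝ) - 1 / 2) (p.2 + 1 / 2)

lemma gcp_uniq (t : ℝ) (a b : ℤ) (ha : t ∈ Set.Ico ((a : ℝ) - 1 / 2) (a + 1 / 2))
    (hb : t ∈ Set.Ico ((b : ℝ) - 1 / 2) (b + 1 / 2)) : a = b := by
  obtain ⟨h1, h2⟩ := ha
  obtain ⟨h3, h4⟩ := hb
  have h5 : (a : ℝ) < b + 1 := by linarith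
  have h6 : (b : ℝ) < a + 1 := by linarith
  have h7 : a < b + 1 := by exact_mod_cast h5
  have h8 : b < a + 1 := by exact_mod_cast h6
  omega

open MeasureTheory in
lemma gcp_volU (x : ℝ) : volume (gcpU x) = ENNReal.ofReal
    (Nat.card {p : ℤ × ℤ // (p.1 : ℝ) ^ 2 + (p.2 : ℝ) ^ 2 ≤ x} : ℝ) := by
  unfold gcpU
  rw [measure_biUnion_finset]
  · have h1 : ∀ p : ℤ × ℤ, volume (Set.Ico ((p.1 : ℝ) - 1 / 2) (p.1 + 1 / 2) ×ˢ
        Set.Ico ((p.2 : ℝ) - 1 / 2) (p.2 + 1 / 2)) = 1 := by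
      intro p
      rw [Measure.volume_eq_prod, Measure.prod_prod, Real.volume_Ico, Real.volume_Ico]
      have h (t : ℝ) : t + 1 / 2 - (t - 1 / 2) = 1 := by ring
      simp [h]
      ring_nf
      simp
    simp only [h1, Finset.sum_const, nsmul_eq_mul, mul_one, ENNReal.ofReal_natCast]
    rw [← Set.ncard_eq_toFinset_card _ (gcp_finite x)]
    rfl
  · intro p _ q _ hpq
    apply Set.disjoint_left.2
    rintro z ⟨h1, h2⟩ ⟨h3, h4⟩
    exact hpq (Prod.ext (gcp_uniq _ _ _ h1 h3) (gcp_uniq _ _ _ h2 h4))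
  · intro p _
    exact measurableSet_Ico.prod measurableSet_Ico

lemma gcp_mem (x : ℝ) (z : ℝ × ℝ) : z ∈ gcpU x ↔ ∃ p : ℤ × ℤ, (p.1 : ℝ) ^ 2 + (p.2 : ℝ) ^ 2 ≤ x ∧
    z.1 ∈ Set.Ico ((p.1 : ℝ) - 1 / 2) (p.1 + 1 / 2) ∧
    z.2 ∈ Set.Ico ((p.2 : ℝ) - 1 / 2) (p.2 + 1 / 2) := by
  simp only [gcpU, Set.mem_iUnion, Set.Finite.mem_toFinset, Set.mem_prod, exists_prop]
  rfl

/-- Triangle inequality in coordinates. -/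
lemma gcp_tri (a b c d r : ℝ) (hr : 0 ≤ r) (h : a ^ 2 + b ^ 2 ≤ r ^ 2)
    (hc : |c - a| ≤ 1 / 2) (hd : |d - b| ≤ 1 / 2) :
    c ^ 2 + d ^ 2 ≤ (r + Real.sqrt 2 / 2) ^ 2 := by
  have hs : Real.sqrt 2 ^ 2 = 2 := Real.sq_sqrt (by norm_num)
  have hs0 := Real.sqrt_nonneg 2
  have h1 : (c - a) ^ 2 ≤ (1 / 2) ^ 2 := sq_le_sq' (abs_le.1 hc).1 (abs_le.1 hc).2
  have h2 : (d - b) ^ 2 ≤ (1 / 2) ^ 2 := sq_le_sq' (abs_le.1 hd).1 (abs_le.1 hd).2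
  have h3 : a * (c - a) + b * (d - b) ≤ r * (Real.sqrt 2 / 2) := by
    apply abs_le_of_sq_le_sq' _ (by positivity) |>.2
    have e : (r * (Real.sqrt 2 / 2)) ^ 2 = r ^ 2 * (1 / 2) := by
      rw [mul_pow, div_pow, hs]; norm_num
    rw [e]
    have h4 : (a ^ 2 + b ^ 2) * ((c - a) ^ 2 + (d - b) ^ 2) ≤ r ^ 2 * (1 / 2) :=
      mul_le_mul h (by linarith) (by positivity) (by positivity)
    nlinarith [sq_nonneg (a * (d - b) - b * (c - a))]
  nlinarith

lemma gcp_sqrt : 0.7 < Real.sqrt 2 / 2 ∧ Real.sqrt 2 / 2 < 0.75 := by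
  have h1 : (1.4 : ℝ) < Real.sqrt 2 := Real.lt_sqrt_of_sq_lt (by norm_num)
  have h2 : Real.sqrt 2 < 1.5 := (Real.sqrt_lt' (by norm_num)).2 (by norm_num)
  constructor <;> linarith

open MeasureTheory in
lemma gcp_strict (A B : ℝ) (S T : Set (ℝ × ℝ)) (hA : 0 ≤ A) (hS : volume S = ENNReal.ofReal A)
    (hT : volume T = ENNReal.ofReal B) (hST : S ⊆ T) (a b c d : ℝ) (hab : a < b) (hcd : c < d)
    (h1 : Set.Ioo a b ×ˢ Set.Ioo c d ⊆ T) (h2 : ∀ z ∈ Set.Ioo a b ×ˢ Set.Ioo c d, z ∉ S) :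
    A < B := by
  have h3 : volume (S ∪ Set.Ioo a b ×ˢ Set.Ioo c d) ≤ volume T :=
    measure_mono (Set.union_subset hST h1)
  rw [measure_union (Set.disjoint_right.2 h2) (measurableSet_Ioo.prod measurableSet_Ioo), hS, hT,
    Measure.volume_eq_prod, Measure.prod_prod, Real.volume_Ioo, Real.volume_Ioo,
    ← ENNReal.ofReal_mul (by linarith)] at h3
  have hp : 0 < (b - a) * (d - c) := mul_pos (by linarith) (by linarith)
  rw [← ENNReal.ofReal_add hA hp.le] at h3
  have h4 := (ENNReal.ofReal_le_ofReal_iff' ).1 h3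
  rcases h4 with h4 | h4 <;> linarith

lemma gcp_main (x : ℝ) (hx : 1 ≤ x) :
      Real.pi * (Real.sqrt x - Real.sqrt 2 / 2) ^ 2 <
          (Nat.card {p : ℤ × ℤ // (p.1 : ℝ) ^ 2 + (p.2 : ℝ) ^ 2 ≤ x} : ℝ) ∧
        (Nat.card {p : ℤ × ℤ // (p.1 : ℝ) ^ 2 + (p.2 : ℝ) ^ 2 ≤ x} : ℝ) <
          Real.pi * (Real.sqrt x + Real.sqrt 2 / 2) ^ 2 := by
  obtain ⟨hs1, hs2⟩ := gcp_sqrt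
  have hx1 : 1 ≤ Real.sqrt x := Real.one_le_sqrt.2 hx
  have hxx : Real.sqrt x ^ 2 = x := Real.sq_sqrt (by linarith)
  have hn1 := Int.floor_le (Real.sqrt x)
  have hn2 := Int.lt_floor_add_one (Real.sqrt x)
  have hn0 : (1 : ℝ) ≤ ⌊Real.sqrt x⌋ := by exact_mod_cast Int.le_floor.2 (by simpa using hx1)
  set n := ⌊Real.sqrt x⌋
  constructor
  · refine gcp_strict _ _ _ _ (by positivity) (gcp_disc _ (by linarith)) (gcp_volU x) ?_
      (n + 0.35) (n + 0.45) 0 0.1 (by linarith) (by norm_num) ?_ ?_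
    · rintro z hz
      rw [gcp_mem]
      have f1 := Int.floor_le (z.1 + 1 / 2)
      have f2 := Int.lt_floor_add_one (z.1 + 1 / 2)
      have f3 := Int.floor_le (z.2 + 1 / 2)
      have f4 := Int.lt_floor_add_one (z.2 + 1 / 2)
      refine ⟨(⌊z.1 + 1 / 2⌋, ⌊z.2 + 1 / 2⌋), ?_, ⟨?_, ?_⟩, ⟨?_, ?_⟩⟩
      · have := gcp_tri z.1 z.2 ⌊z.1 + 1 / 2⌋ ⌊z.2 + 1 / 2⌋ _ (by linarith) hz
          (abs_le.2 ⟨by linarith, by linarith⟩) (abs_le.2 ⟨by linarith, by linarith⟩)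
        rwa [sub_add_cancel, hxx] at this
      all_goals dsimp only; linarith
    · rintro z ⟨⟨h1, h2⟩, h3, h4⟩
      rw [gcp_mem]
      refine ⟨(n, 0), ?_, ⟨?_, ?_⟩, ⟨?_, ?_⟩⟩
      · simp only [Int.cast_zero]
        nlinarith
      all_goals simp only [Int.cast_zero]; linarith
    · rintro z ⟨⟨h1, h2⟩, h3, h4⟩ hz
      simp only [Set.mem_ofPred_eq] at hz
      nlinarith [sq_nonneg z.2]
  · refine gcp_strict _ _ _ _ (by positivity) (gcp_volU x) (gcp_disc _ (by linarith)) ?_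
      (n + 0.55) (n + 0.65) 0 0.04 (by linarith) (by norm_num) ?_ ?_
    · rintro z hz
      obtain ⟨p, hp, ⟨h1, h2⟩, h3, h4⟩ := (gcp_mem x z).1 hz
      rw [← hxx] at hp
      exact gcp_tri p.1 p.2 z.1 z.2 _ (by linarith) hp
          (abs_le.2 ⟨by linarith, by linarith⟩) (abs_le.2 ⟨by linarith, by linarith⟩)
    · rintro z ⟨⟨h1, h2⟩, h3, h4⟩
      simp only [Set.mem_ofPred_eq]
      have h5 : (z.1 + z.2) ^ 2 ≤ (Real.sqrt x + Real.sqrt 2 / 2) ^ 2 :=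
        pow_le_pow_left₀ (by linarith) (by linarith) 2
      have h6 : 0 ≤ z.1 * z.2 := mul_nonneg (by linarith) h3.le
      nlinarith
    · rintro z ⟨⟨h1, h2⟩, h3, h4⟩ hz
      obtain ⟨p, hp, h5, -⟩ := (gcp_mem x z).1 hz
      have h6 : p.1 = n + 1 := gcp_uniq z.1 _ _ h5
        ⟨by push_cast; linarith, by push_cast; linarith⟩
      rw [h6] at hp
      push_cast at hp
      nlinarith [sq_nonneg (p.2 : ℝ)]

theorem gauss_circle_problem :
    (∀ x : ℝ, 1 ≤ x →
      Real.pi * (Real.sqrt x - Real.sqrt 2 / 2) ^ 2 <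
          (Nat.card {p : ℤ × ℤ // (p.1 : ℝ) ^ 2 + (p.2 : ℝ) ^ 2 ≤ x} : ℝ) ∧
        (Nat.card {p : ℤ × ℤ // (p.1 : ℝ) ^ 2 + (p.2 : ℝ) ^ 2 ≤ x} : ℝ) <
          Real.pi * (Real.sqrt x + Real.sqrt 2 / 2) ^ 2) ∧
    (fun x : ℝ => (Nat.card {p : ℤ × ℤ // (p.1 : ℝ) ^ 2 + (p.2 : ℝ) ^ 2 ≤ x} : ℝ) -
        Real.pi * x) =O[atTop] fun x : ℝ => x ^ ((1 : ℝ) / 2) := by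
  refine ⟨gcp_main, ?_⟩
  apply Asymptotics.IsBigO.of_bound (Real.pi * 3)
  filter_upwards [eventually_ge_atTop 1] with x hx
  obtain ⟨h1, h2⟩ := gcp_main x hx
  obtain ⟨hs1, hs2⟩ := gcp_sqrt
  rw [← Real.sqrt_eq_rpow, Real.norm_eq_abs, Real.norm_eq_abs, abs_of_nonneg (Real.sqrt_nonneg x)]
  have hx1 : 1 ≤ Real.sqrt x := Real.one_le_sqrt.2 hx
  have hxx : Real.sqrt x ^ 2 = x := Real.sq_sqrt (by linarith)
  have k1 : Real.pi * (x - 3 * Real.sqrt x) ≤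
      Real.pi * (Real.sqrt x - Real.sqrt 2 / 2) ^ 2 :=
    mul_le_mul_of_nonneg_left (by nlinarith) Real.pi_pos.le
  have k2 : Real.pi * (Real.sqrt x + Real.sqrt 2 / 2) ^ 2 ≤
      Real.pi * (x + 3 * Real.sqrt x) :=
    mul_le_mul_of_nonneg_left (by nlinarith) Real.pi_pos.le
  rw [abs_le]
  constructor <;> linarith
end

section
/- Mean value of lattice points in balls: For every integer d ≥ 1, lim_{x→∞} x^{−d/2} · #{a ∈ ℤ^d : a₁² + ⋯ + a_d² ≤ x} = π^{d/2}/Γ(d/2 + 1), i.e. the counting function of integer points in the ball of radius √x, divided by x^{d/2}, converges to the volume of the d-dimensional Euclidean unit ball. -/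
open Filter

theorem aux_mem_span (d : ℕ) (v : Fin d → ℝ) :
    v ∈ Submodule.span ℤ (Set.range (Pi.basisFun ℝ (Fin d))) ↔ ∃ a : Fin d → ℤ, ∀ i, (a i : ℝ) = v i := by
  rw [Module.Basis.mem_span_iff_repr_mem]
  simp only [Pi.basisFun_repr, Set.mem_range, algebraMap_int_eq, eq_intCast]
  exact Classical.skolem

open scoped Pointwise in
theorem aux_card (d : ℕ) (r : ℝ) (hr : 0 < r) :
    Nat.card {a : Fin d → ℤ // ∑ i, ((a i : ℝ)) ^ 2 ≤ r ^ 2} =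
    Nat.card ↑({v : Fin d → ℝ | ∑ i, v i ^ 2 ≤ 1} ∩
      r⁻¹ • (Submodule.span ℤ (Set.range (Pi.basisFun ℝ (Fin d))) : Set (Fin d → ℝ)) : Set (Fin d → ℝ)) := by
  have hs (w : Fin d → ℝ) : ∑ i, (r⁻¹ * w i) ^ 2 ≤ 1 ↔ ∑ i, w i ^ 2 ≤ r ^ 2 := by
    simp only [mul_pow, ← Finset.mul_sum, inv_pow]
    rw [inv_mul_le_iff₀ (by positivity), mul_one]
  refine Nat.card_congr (Equiv.ofBijective (fun a => ⟨r⁻¹ • (fun i => (a.1 i : ℝ)), ?_, ?_⟩) ⟨?_, ?_⟩)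
  · simpa [hs] using a.2
  · exact Set.smul_mem_smul_set ((aux_mem_span d _).2 ⟨a.1, fun i => rfl⟩)
  · intro a b h
    have h2 := smul_right_injective (Fin d → ℝ) (inv_ne_zero hr.ne') (congrArg Subtype.val h)
    ext i
    exact_mod_cast congrFun h2 i
  · rintro ⟨v, hv, w, hw, rfl⟩
    obtain ⟨a, ha⟩ := (aux_mem_span d w).1 hw
    obtain rfl : (fun i => (a i : ℝ)) = w := funext ha
    refine ⟨⟨a, ?_⟩, rfl⟩
    simpa [hs] using hv

theorem lattice_points_in_balls_asymptotics (d : ℕ) (hd : 1 ≤ d) :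
    Tendsto (fun x : ℝ =>
        (Nat.card {a : Fin d → ℤ // ∑ i, ((a i : ℝ)) ^ 2 ≤ x} : ℝ) / x ^ ((d : ℝ) / 2))
      atTop (nhds (Real.pi ^ ((d : ℝ) / 2) / Real.Gamma ((d : ℝ) / 2 + 1))) := by
  have : Nonempty (Fin d) := ⟨⟨0, hd⟩⟩
  set s : Set (Fin d → ℝ) := {v | ∑ i, v i ^ 2 ≤ 1} with hsdef
  have hpre : s = (WithLp.toLp 2 : (Fin d → ℝ) → EuclideanSpace ℝ (Fin d)) ⁻¹'
      Metric.closedBall 0 1 := by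
    ext v
    simp [hsdef, EuclideanSpace.norm_eq, Real.sqrt_le_iff]
  have hrp (y : ℝ) (hy : 0 ≤ y) : √y ^ d = y ^ ((d : ℝ) / 2) := by
    rw [Real.sqrt_eq_rpow, ← Real.rpow_natCast, ← Real.rpow_mul hy]
    congr 1; ring
  have hvol : MeasureTheory.volume.real s =
      Real.pi ^ ((d : ℝ) / 2) / Real.Gamma ((d : ℝ) / 2 + 1) := by
    rw [MeasureTheory.measureReal_def, hpre,
      (PiLp.volume_preserving_toLp (Fin d)).measure_preimage
        measurableSet_closedBall.nullMeasurableSet, EuclideanSpace.volume_closedBall]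
    have : 0 < Real.Gamma ((d : ℝ) / 2 + 1) := Real.Gamma_pos_of_pos (by positivity)
    simp only [ENNReal.ofReal_one, one_pow, one_mul, Fintype.card_fin]
    rw [ENNReal.toReal_ofReal (by positivity), hrp _ Real.pi_pos.le]
  have hle (v : Fin d → ℝ) (hv : v ∈ s) (i : Fin d) : |v i| ≤ 1 := by
    rw [← sq_le_one_iff_abs_le_one]
    exact (Finset.single_le_sum (f := fun i => v i ^ 2) (fun _ _ => sq_nonneg _)
      (Finset.mem_univ i)).trans hv
  have hb : Bornology.IsBounded s := by
    refine (Metric.isBounded_closedBall (x := (0 : Fin d → ℝ)) (r := 1)).subset fun v hv => ?_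
    rw [mem_closedBall_zero_iff, pi_norm_le_iff_of_nonneg zero_le_one]
    exact hle v hv
  have hc : IsClosed s := isClosed_le (by fun_prop) continuous_const
  have hconv : Convex ℝ s := by
    rw [hpre]
    exact (convex_closedBall _ _).linear_preimage (WithLp.linearEquiv 2 ℝ (Fin d → ℝ)).symm.toLinearMap
  have key := tendsto_card_div_pow_atTop_volume' s hb hc.measurableSet
    (hconv.addHaar_frontier _) (by
      rintro x y hx hxy _ ⟨v, hv, rfl⟩
      have hy := hx.trans_le hxy
      refine ⟨(x / y) • v, hconv.smul_mem_of_zero_mem (by simp [hsdef]) hv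
        ⟨by positivity, (div_le_one hy).2 hxy⟩, ?_⟩
      simp only [smul_smul]
      congr 1; field_simp)
  rw [hvol] at key
  refine (key.comp Real.tendsto_sqrt_atTop).congr' ?_
  filter_upwards [eventually_gt_atTop 0] with x hx
  have h := aux_card d (√x) (Real.sqrt_pos.2 hx)
  rw [Real.sq_sqrt hx.le] at h
  simp only [Function.comp, Fintype.card_fin]
  rw [h, hrp x hx.le]
end

section
/- Gauss's Eureka theorem: Every natural number n can be written as the sum of at most three triangular numbers, i.e. there exist natural numbers a, b, c ≥ 0 such that n = a(a+1)/2 + b(b+1)/2 + c(c+1)/2. -/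
/-- Reduction of a positive binary form `A x² + 2B xy + C y²`. -/
theorem binary_reduction (N : ℕ) : ∀ A B C D : ℤ, 0 < A → A ≤ N → 0 < D → A * C - B ^ 2 = D →
    ∃ p q u v : ℤ, p * v - q * u = 1 ∧ 0 < A * p ^ 2 + 2 * B * p * q + C * q ^ 2 ∧
      3 * (A * p ^ 2 + 2 * B * p * q + C * q ^ 2) ^ 2 ≤ 4 * D := by
  induction N with
  | zero => intro A B C D h1 h2; simp at h2; omega
  | succ N ih =>
    intro A B C D hA hN hD hdet
    obtain ⟨k, hk1, hk2⟩ : ∃ k : ℤ, 2 * (B + k * A) ≤ A ∧ -A ≤ 2 * (B + k * A) := by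
      refine ⟨-((2 * B + A) / (2 * A)), ?_, ?_⟩
      · have h := Int.emod_lt_of_pos (2 * B + A) (show 0 < 2 * A by omega)
        have h3 := Int.emod_add_mul_ediv (2 * B + A) (2 * A)
        nlinarith
      · have h := Int.emod_nonneg (2 * B + A) (show 2 * A ≠ 0 by omega)
        have h3 := Int.emod_add_mul_ediv (2 * B + A) (2 * A)
        nlinarith
    obtain ⟨B1, hB1⟩ : ∃ B1, B1 = B + k * A := ⟨_, rfl⟩
    obtain ⟨C1, hC1⟩ : ∃ C1, C1 = C + 2 * k * B + k ^ 2 * A := ⟨_, rfl⟩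
    rw [← hB1] at hk1 hk2
    have hdet1 : A * C1 - B1 ^ 2 = D := by rw [← hdet, hB1, hC1]; ring
    by_cases hAC : A ≤ C1
    · refine ⟨1, 0, 0, 1, by norm_num, by simpa using hA, ?_⟩
      have : 4 * B1 ^ 2 ≤ A ^ 2 := by nlinarith
      have : A * A ≤ A * C1 := by nlinarith
      nlinarith
    · have hC1pos : 0 < C1 := by
        by_contra h
        have : A * C1 ≤ 0 := by nlinarith
        nlinarith [sq_nonneg B1]
      obtain ⟨p, q, u, v, h1, h2, h3⟩ := ih C1 (-B1) A D hC1pos (by push_cast at hN; omega) hD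
        (by rw [← hdet1]; ring)
      have e : A * (p * k - q) ^ 2 + 2 * B * (p * k - q) * p + C * p ^ 2
          = C1 * p ^ 2 + 2 * (-B1) * p * q + A * q ^ 2 := by rw [hB1, hC1]; ring
      refine ⟨p * k - q, p, u * k - v, u, by rw [← h1]; ring, ?_, ?_⟩
      · rw [e]; exact h2
      · rw [e]; exact h3

/-- All values of the ternary form are sums of three squares. -/
def TernSum (a b c r s t : ℤ) : Prop :=
  ∀ x y z : ℤ, ∃ i j k : ℤ,
    a * x ^ 2 + b * y ^ 2 + c * z ^ 2 + 2 * r * y * z + 2 * s * x * z + 2 * t * x * y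
      = i ^ 2 + j ^ 2 + k ^ 2

theorem ternSum_yz (a b c r s t p q u v : ℤ) (h : p * v - q * u = 1)
    (H : TernSum a (b * p ^ 2 + 2 * r * p * q + c * q ^ 2)
      (b * u ^ 2 + 2 * r * u * v + c * v ^ 2)
      (b * p * u + r * (p * v + q * u) + c * q * v) (t * u + s * v) (t * p + s * q)) :
    TernSum a b c r s t := by
  intro x y z
  obtain ⟨i, j, k, e⟩ := H x (v * y - u * z) (p * z - q * y)
  refine ⟨i, j, k, ?_⟩
  rw [← e]
  have hy : y = p * (v * y - u * z) + u * (p * z - q * y) := by linear_combination (-y) * h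
  have hz : z = q * (v * y - u * z) + v * (p * z - q * y) := by linear_combination (-z) * h
  generalize v * y - u * z = Y at *
  generalize p * z - q * y = Z at *
  subst hy hz
  ring

theorem ternSum_xy (a b c r s t p q u v : ℤ) (h : p * v - q * u = 1)
    (H : TernSum (a * p ^ 2 + 2 * t * p * q + b * q ^ 2)
      (a * u ^ 2 + 2 * t * u * v + b * v ^ 2) c (s * u + r * v) (s * p + r * q)
      (a * p * u + t * (p * v + q * u) + b * q * v)) :
    TernSum a b c r s t := by
  intro x y z
  obtain ⟨i, j, k, e⟩ := H (v * x - u * y) (p * y - q * x) z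
  refine ⟨i, j, k, ?_⟩
  rw [← e]
  have hx : x = p * (v * x - u * y) + u * (p * y - q * x) := by linear_combination (-x) * h
  have hy : y = q * (v * x - u * y) + v * (p * y - q * x) := by linear_combination (-y) * h
  generalize v * x - u * y = X at *
  generalize p * y - q * x = Y at *
  subst hx hy
  ring

theorem ternSum_of_one (b c r s t : ℤ) (hb : b - t ^ 2 = 1)
    (hdet : (b - t ^ 2) * (c - s ^ 2) - (r - s * t) ^ 2 = 1) : TernSum 1 b c r s t := by
  intro x y z
  refine ⟨x + t * y + s * z, y + (r - s * t) * z, z, ?_⟩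
  rw [hb] at hdet
  linear_combination y ^ 2 * hb + z ^ 2 * hdet

theorem ternSum_main (N : ℕ) : ∀ a b c r s t : ℤ, 0 < a → a ≤ N → 0 < a * b - t ^ 2 →
    a * b * c + 2 * r * s * t - a * r ^ 2 - b * s ^ 2 - c * t ^ 2 = 1 →
    TernSum a b c r s t := by
  induction N with
  | zero => intro a b c r s t h1 h2; simp at h2; omega
  | succ N ih =>
    intro a b c r s t ha hN hA hdet
    obtain ⟨p, q, u, v, h1, h2, h3⟩ := binary_reduction (a * b - t ^ 2).toNat
      (a * b - t ^ 2) (a * r - s * t) (a * c - s ^ 2) a hA (by omega) ha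
      (by linear_combination a * hdet)
    apply ternSum_yz a b c r s t p q u v h1
    obtain ⟨b', hb'⟩ : ∃ b', b' = b * p ^ 2 + 2 * r * p * q + c * q ^ 2 := ⟨_, rfl⟩
    obtain ⟨c', hc'⟩ : ∃ c', c' = b * u ^ 2 + 2 * r * u * v + c * v ^ 2 := ⟨_, rfl⟩
    obtain ⟨r', hr'⟩ : ∃ r', r' = b * p * u + r * (p * v + q * u) + c * q * v := ⟨_, rfl⟩
    obtain ⟨s', hs'⟩ : ∃ s', s' = t * u + s * v := ⟨_, rfl⟩
    obtain ⟨t', ht'⟩ : ∃ t', t' = t * p + s * q := ⟨_, rfl⟩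
    have eA : (a * b - t ^ 2) * p ^ 2 + 2 * (a * r - s * t) * p * q + (a * c - s ^ 2) * q ^ 2
        = a * b' - t' ^ 2 := by rw [hb', ht']; ring
    have hdet' : a * b' * c' + 2 * r' * s' * t' - a * r' ^ 2 - b' * s' ^ 2 - c' * t' ^ 2 = 1 := by
      have : a * b' * c' + 2 * r' * s' * t' - a * r' ^ 2 - b' * s' ^ 2 - c' * t' ^ 2 =
          (a * b * c + 2 * r * s * t - a * r ^ 2 - b * s ^ 2 - c * t ^ 2)
            * (p * v - q * u) ^ 2 := by
        rw [hb', hc', hr', hs', ht']; ring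
      rw [this, h1, hdet]; norm_num
    rw [eA] at h2 h3
    rw [← hb', ← hc', ← hr', ← hs', ← ht']
    clear hb' hc' hr' hs' ht' eA h1
    by_cases ha1 : a = 1
    · subst ha1
      have e1 : b' - t' ^ 2 = 1 := by nlinarith
      exact ternSum_of_one _ _ _ _ _ e1 (by linear_combination hdet')
    obtain ⟨p, q, u, v, h1, h4, h5⟩ := binary_reduction a.toNat
      a t' b' (a * b' - t' ^ 2) ha (by omega) h2 rfl
    apply ternSum_xy _ _ _ _ _ _ p q u v h1
    have key : a * p ^ 2 + 2 * t' * p * q + b' * q ^ 2 < a := by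
      by_contra hlt
      push Not at hlt
      have k1 : 3 * a ^ 2 ≤ 4 * (a * b' - t' ^ 2) := by nlinarith
      generalize a * b' - t' ^ 2 = A at *
      have k2 : 9 * a ^ 4 ≤ 16 * A ^ 2 := by nlinarith [sq_nonneg a]
      have k3 : 27 * a ^ 3 ≤ 64 := by
        have : a * (27 * a ^ 3) ≤ a * 64 := by nlinarith
        exact le_of_mul_le_mul_left this ha
      have : 2 ≤ a := by omega
      have : 8 ≤ a ^ 3 := by
        calc (8 : ℤ) = 2 ^ 3 := by norm_num
          _ ≤ a ^ 3 := by gcongr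
      omega
    apply ih _ _ _ _ _ _ h4 (by push_cast at hN; omega)
    · have : (a * p ^ 2 + 2 * t' * p * q + b' * q ^ 2) * (a * u ^ 2 + 2 * t' * u * v + b' * v ^ 2)
        - (a * p * u + t' * (p * v + q * u) + b' * q * v) ^ 2
        = (a * b' - t' ^ 2) * (p * v - q * u) ^ 2 := by ring
      rw [this, h1]; simpa using h2
    · have h1' : (p * v - q * u) ^ 2 = 1 := by rw [h1]; norm_num
      linear_combination hdet' * (p * v - q * u) ^ 2 + h1'

/-- The arithmetic input: a prime in a progression with the right quadratic residue. -/
theorem exists_residue (m : ℕ) : ∃ b d w e : ℤ, 0 < b ∧ d = b * (8 * m + 3) - 1 ∧ 0 < d ∧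
    w ^ 2 + b = e * d := by
  have hcop : (4 * m + 1).Coprime (4 * (8 * m + 3)) := by
    apply Nat.Coprime.mul_right
    · rw [show 4 * m + 1 = 1 + m * 4 by ring]; simp
    · rw [show 8 * m + 3 = 1 + 2 * (4 * m + 1) by ring]; simp
  obtain ⟨p, hgt, hp, hmod⟩ := Nat.forall_exists_prime_gt_and_modEq (4 * m + 1)
    (show 4 * (8 * m + 3) ≠ 0 by omega) hcop
  obtain ⟨j, hj⟩ := (Nat.modEq_iff_dvd' hgt.le).1 hmod.symm
  have hpj : p = 4 * m + 1 + 4 * (8 * m + 3) * j := by omega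
  have hp4 : p % 4 = 1 := by
    rw [hpj, show 4 * m + 1 + 4 * (8 * m + 3) * j = 1 + 4 * (m + (8 * m + 3) * j) by ring]
    omega
  obtain ⟨B, hB⟩ : ∃ B : ℕ, B = 8 * j + 1 := ⟨_, rfl⟩
  have hpB : (2 * p : ℤ) = B * (8 * m + 3) - 1 := by
    rw [hpj, hB]; push_cast; ring
  have : Fact p.Prime := ⟨hp⟩
  have hpodd : Odd p := Nat.odd_iff.2 (by omega)
  have hBodd : Odd B := Nat.odd_iff.2 (by omega)
  have J1 : jacobiSym (-2 * p) B = 1 := by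
    rw [show (-2 * p : ℤ) = 1 - B * (8 * m + 3) by linarith]
    rw [jacobiSym.mod_left' (a₂ := 1), jacobiSym.one_left]
    simp [Int.sub_emod]
  have J2 : jacobiSym (-2) B = 1 := by
    rw [jacobiSym.at_neg_two hBodd, ZMod.χ₈'_nat_eq_if_mod_eight]
    have : B % 8 = 1 := by omega
    simp [this]; omega
  have J3 : jacobiSym (p : ℤ) B = 1 := by
    rw [jacobiSym.mul_left, J2, one_mul] at J1; exact J1
  have J4 : jacobiSym (-(B : ℤ)) p = 1 := by
    rw [neg_eq_neg_one_mul, jacobiSym.mul_left, jacobiSym.at_neg_one hpodd,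
      ZMod.χ₄_nat_one_mod_four hp4, one_mul,
      ← jacobiSym.quadratic_reciprocity_one_mod_four hp4 hBodd, J3]
  obtain ⟨x, hx⟩ := ZMod.isSquare_of_jacobiSym_eq_one J4
  have hdvd : ∀ y : ℤ, (y : ZMod p) = x → (p : ℤ) ∣ y ^ 2 + B := by
    intro y hy
    rw [← ZMod.intCast_zmod_eq_zero_iff_dvd]
    push_cast at hx ⊢
    rw [hy, pow_two, ← hx]; ring
  obtain ⟨y, hyx, hyodd⟩ : ∃ y : ℤ, (y : ZMod p) = x ∧ y % 2 = 1 := by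
    obtain ⟨y, hy⟩ := ZMod.intCast_surjective x
    rcases Int.emod_two_eq_zero_or_one y with h | h
    · exact ⟨y + p, by simp [hy], by omega⟩
    · exact ⟨y, hy, h⟩
  have h2 : (2 : ℤ) ∣ y ^ 2 + B := by
    obtain ⟨k, hk⟩ : ∃ k, y = 2 * k + 1 := ⟨y / 2, by omega⟩
    exact ⟨2 * k ^ 2 + 2 * k + 1 + 4 * j, by rw [hk, hB]; push_cast; ring⟩
  have hc : IsCoprime (2 : ℤ) p := by
    have : Nat.Coprime 2 p := (Nat.coprime_two_left).2 hpodd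
    exact_mod_cast Nat.isCoprime_iff_coprime.2 this
  obtain ⟨e, he⟩ := hc.mul_dvd h2 (hdvd y hyx)
  exact ⟨B, 2 * p, y, e, by omega, hpB, by have := hp.pos; omega, by rw [he]; ring⟩

theorem three_squares (m : ℕ) : ∃ i j k : ℤ, (8 * m + 3 : ℤ) = i ^ 2 + j ^ 2 + k ^ 2 := by
  obtain ⟨b, d, w, e, hb, hd, hd0, hw⟩ := exists_residue m
  have he : 0 < e := by
    by_contra h
    have : e * d ≤ 0 := by nlinarith
    nlinarith [sq_nonneg w]
  have := ternSum_main e.toNat e d (8 * m + 3) 0 1 w he (by omega) (by linarith)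
    (by linear_combination (-(8 * m + 3 : ℤ)) * hw - hd)
  obtain ⟨i, j, k, h⟩ := this 0 0 1
  exact ⟨i, j, k, by rw [← h]; ring⟩

theorem odd_tri (i : ℤ) (h : i % 2 = 1) :
    ∃ a : ℕ, i ^ 2 = 8 * ((a * (a + 1) / 2 : ℕ) : ℤ) + 1 := by
  refine ⟨i.natAbs / 2, ?_⟩
  obtain ⟨a, ha⟩ : ∃ a, i.natAbs = 2 * a + 1 := ⟨i.natAbs / 2, by omega⟩
  have h1 : i.natAbs / 2 = a := by omega
  rw [h1]
  have h2 : a * (a + 1) / 2 * 2 = a * (a + 1) :=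
    Nat.div_mul_cancel (Nat.even_mul_succ_self a).two_dvd
  rw [← Int.natAbs_sq, ha]
  have h3 : ((a * (a + 1) / 2 : ℕ) : ℤ) * 2 = a * (a + 1) := by exact_mod_cast h2
  push_cast at h3 ⊢
  linarith

theorem gauss_eureka (n : ℕ) :
    ∃ a b c : ℕ, n = a * (a + 1) / 2 + b * (b + 1) / 2 + c * (c + 1) / 2 := by
  obtain ⟨i, j, k, h⟩ := three_squares n
  have sq4 : ∀ x : ℤ, (x % 2 = 0 ∧ x ^ 2 % 4 = 0) ∨ (x % 2 = 1 ∧ x ^ 2 % 4 = 1) := by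
    intro x
    have : x % 4 = 0 ∨ x % 4 = 1 ∨ x % 4 = 2 ∨ x % 4 = 3 := by omega
    rcases this with h | h | h | h <;> simp [pow_two, Int.mul_emod, h] <;> omega
  have hi := sq4 i
  have hj := sq4 j
  have hk := sq4 k
  obtain ⟨a, ha⟩ := odd_tri i (by omega)
  obtain ⟨b, hb⟩ := odd_tri j (by omega)
  obtain ⟨c, hc⟩ := odd_tri k (by omega)
  refine ⟨a, b, c, ?_⟩
  rw [ha, hb, hc] at h
  generalize a * (a + 1) / 2 = A at *
  generalize b * (b + 1) / 2 = B at *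
  generalize c * (c + 1) / 2 = C at *
  omega
end
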